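/- arXiv:1709.06732 — 2 statements merged into one kernel-verified Lean document; each statement's English description precedes it below -/
import Mathlib

section
/- Let F₀ be a field of characteristic 0 that is finitely generated over ℚ. Then the set of triples (a₁, a₂, [Z₁ : Z₂ : Z₃]) with a₁ > a₂ > 0 integers and [Z₁ : Z₂ : Z₃] a point of the projective plane ℙ²(F₀), satisfying the system 3^{a₁}Z₁³ + 3^{a₂}Z₂³ + Z₃³ = 0 and 3^{a₁}Z₁ + 3^{a₂}Z₂ + Z₃ = 0, is finite. -/
open PowerSeries in
theorem pade_ode (ν : ℚ) (m : ℚ) (f Q : ℚ⟦X⟧)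
  (hf : (1+X) * derivative ℚ f = C ν * f)
  (hQ : X*(1+X)*derivative ℚ (derivative ℚ Q) - (C (2*m) + C (2*m-ν-1) * X) * derivative ℚ Q + C (m*(m-ν)) * Q = 0) :
  X*(1+X)*derivative ℚ (derivative ℚ (f*Q)) - (C (2*m) + C (2*m+ν-1) * X) * derivative ℚ (f*Q) + C (m*(m+ν)) * (f*Q) = 0 := by
  have h2 := congrArg (derivative ℚ) hf
  simp only [Derivation.leibniz, map_add, derivative_C, derivative_X, smul_eq_mul, Derivation.map_one_eq_zero] at h2 ⊢
  have h1 : (1+X : ℚ⟦X⟧) ≠ 0 := by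
    intro h
    have := congrArg (constantCoeff) h
    simp at this
  apply mul_left_cancel₀ h1
  simp only [map_mul, map_sub, map_add, map_one, map_ofNat] at *
  generalize derivative ℚ (derivative ℚ f) = f2 at *
  generalize derivative ℚ f = f1 at *
  generalize derivative ℚ (derivative ℚ Q) = Q2 at *
  generalize derivative ℚ Q = Q1 at *
  have e2 : (1+X)*f2 = (C ν - 1) * f1 := by linear_combination h2
  linear_combination (f*(1+X)) * hQ + (X*(1+X)*Q) * e2 + (2*X*(1+X)*Q1 - (2*C m + (2 * C m + C ν-1)*X)*Q + X*Q*(C ν -1)) * hf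
open PowerSeries in
theorem pade_ode_iff (ν m : ℚ) (y : ℚ⟦X⟧) :
  (X*(1+X)*derivative ℚ (derivative ℚ y) - (C (2*m) + C (2*m+ν-1) * X) * derivative ℚ y + C (m*(m+ν)) * y = 0) ↔
  ∀ j : ℕ, ((j:ℚ)+1)*(2*m-j)*coeff (j+1) y = (m-j)*(m+ν-j)*coeff j y := by
  have e : X*(1+X)*derivative ℚ (derivative ℚ y) - (C (2*m) + C (2*m+ν-1) * X) * derivative ℚ y + C (m*(m+ν)) * y
    = X * derivative ℚ (derivative ℚ y) + X * (X * derivative ℚ (derivative ℚ y)) - C (2*m) * derivative ℚ y - C (2*m+ν-1) * (X * derivative ℚ y) + C (m*(m+ν)) * y := by ring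
  rw [e, PowerSeries.ext_iff]
  clear e
  generalize hw : 2*m+ν-1 = w
  apply forall_congr'
  intro j
  rcases j with _ | j
  · simp only [map_sub, map_add, coeff_C_mul, coeff_zero_X_mul, coeff_derivative, map_zero]
    push_cast
    constructor <;> intro h <;> (subst hw; linear_combination -h)
  · rcases j with _ | j
    · simp only [map_sub, map_add, coeff_C_mul, coeff_succ_X_mul, coeff_zero_X_mul, coeff_derivative, map_zero]
      push_cast
      constructor <;> intro h <;> (subst hw; linear_combination -h)
    · simp only [map_sub, map_add, coeff_C_mul, coeff_succ_X_mul, coeff_derivative, map_zero]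
      push_cast
      constructor <;> intro h <;> (subst hw; linear_combination -h)

/-- generalized binomial coefficient -/
noncomputable def gb (α : ℚ) (j : ℕ) : ℚ := ∏ i ∈ Finset.range j, (α - i) / (i + 1)

theorem gb_zero (α : ℚ) : gb α 0 = 1 := by simp [gb]

theorem gb_succ (α : ℚ) (j : ℕ) : ((j:ℚ)+1) * gb α (j+1) = (α - j) * gb α j := by
  unfold gb; rw [Finset.prod_range_succ]; field_simp

theorem gb_abs_le_one (j : ℕ) : |gb (1/3) j| ≤ 1 := by
  unfold gb; rw [Finset.abs_prod]
  apply Finset.prod_le_one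
  · intros; positivity
  · intro i _
    rw [abs_div, div_le_one (by positivity), abs_of_pos (by positivity : (0:ℚ) < i+1), abs_le]
    have : (0:ℚ) ≤ i := by positivity
    constructor <;> linarith

theorem gb_abs_le (m j : ℕ) (hj : j ≤ m) (ν : ℚ) (h : |ν| ≤ 1) : |gb (m+ν) j| ≤ ((m+1).choose j : ℚ) := by
  induction j with
  | zero => simp [gb_zero]
  | succ j ih =>
    have h1 := ih (by omega)
    have h2 := gb_succ (m+ν) j
    have h3 : (((m+1).choose (j+1) : ℕ) : ℚ) * (j+1) = (m+1).choose j * ((m:ℚ)+1-j) := by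
      have := Nat.choose_succ_right_eq (m+1) j
      have h4 : ((m+1-j : ℕ):ℚ) = (m:ℚ)+1-j := by push_cast [Nat.cast_sub (show j ≤ m+1 by omega)]; ring
      rw [← h4]; exact_mod_cast this
    have h5 : |(m:ℚ)+ν-j| ≤ (m:ℚ)+1-j := by
      have : (j:ℚ)+1 ≤ m := by exact_mod_cast hj
      rw [abs_le] at *; constructor <;> linarith
    have h6 : ((j:ℚ)+1) * |gb (m+ν) (j+1)| = |(m:ℚ)+ν-j| * |gb (m+ν) j| := by
      rw [← abs_mul, ← h2, abs_mul, abs_of_pos (by positivity : (0:ℚ) < j+1)]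
    have : |(m:ℚ)+ν-j| * |gb (m+ν) j| ≤ ((m:ℚ)+1-j) * (m+1).choose j :=
      mul_le_mul h5 h1 (abs_nonneg _) (le_trans (abs_nonneg _) h5)
    have hp : (0:ℚ) < j+1 := by positivity
    nlinarith

theorem fact_dvd_prod (a : ℤ) (j : ℕ) : ((j.factorial : ℕ) : ℤ) ∣ 3^j * ∏ i ∈ Finset.range j, (a - 3*i) := by
  obtain ⟨s, n', h3, hn⟩ := Nat.exists_eq_pow_mul_and_not_dvd (Nat.factorial_ne_zero j) 3 (by norm_num)
  have hcop : Nat.Coprime 3 n' := (Nat.Prime.coprime_iff_not_dvd Nat.prime_three).2 h3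
  have hs : s ≤ j := by
    have h1 : 3^s ∣ j.factorial := ⟨n', hn⟩
    have h2 : s ≤ padicValNat 3 j.factorial := by
      have : Fact (Nat.Prime 3) := ⟨Nat.prime_three⟩
      exact (padicValNat_dvd_iff_le (Nat.factorial_ne_zero j)).1 h1
    have : Fact (Nat.Prime 3) := ⟨Nat.prime_three⟩
    have := sub_one_mul_padicValNat_factorial (p := 3) j
    omega
  rw [hn]; push_cast
  apply mul_dvd_mul (pow_dvd_pow _ hs)
  obtain ⟨u, hu⟩ : ∃ u : ℤ, (n':ℤ) ∣ 3*u - 1 := by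
    have := Int.isCoprime_iff_gcd_eq_one.2 (show Int.gcd (3:ℤ) n' = 1 from hcop)
    obtain ⟨x, y, h⟩ := this
    exact ⟨x, -y, by linear_combination h⟩
  have h1 : ∏ i ∈ Finset.range j, (a - 3*(i:ℤ)) ≡ ∏ i ∈ Finset.range j, (3 * (u*a - i)) [ZMOD n'] := by
    apply Int.ModEq.prod
    intro i _
    rw [Int.modEq_iff_dvd]
    have : 3 * (u*a - i) - (a-3*(i:ℤ)) = (3*u-1)*a := by ring
    rw [this]; exact hu.mul_right _
  rw [Int.ModEq.dvd_iff h1]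
  rw [Finset.prod_mul_distrib]
  apply Dvd.dvd.mul_left
  have h2 : ((j.factorial : ℕ):ℤ) ∣ ∏ i ∈ Finset.range j, (u*a - (i:ℤ)) := by
    have := Ring.descPochhammer_eq_factorial_smul_choose (u*a) j
    rw [← Polynomial.eval_eq_smeval, descPochhammer_eval_eq_prod_range] at this
    rw [this]; exact ⟨_, nsmul_eq_mul _ _⟩
  exact dvd_trans ⟨3^s, by rw [hn]; push_cast; ring⟩ h2
/-- Pade coefficients -/
noncomputable def pcq (ν : ℚ) (m j : ℕ) : ℚ := if j ≤ m then gb (m+ν) j * ((2*m-j).choose m : ℕ) else 0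

theorem pcq_rec (ν : ℚ) (m j : ℕ) :
    ((j:ℚ)+1)*(2*m-j)*pcq ν m (j+1) = (m-j)*(m+ν-j)*pcq ν m j := by
  unfold pcq
  rcases lt_trichotomy j m with h | h | h
  · rw [if_pos (show j+1 ≤ m by omega), if_pos h.le]
    have h1 := gb_succ (m+ν) j
    have h2 : (((2*m-(j+1)).choose m : ℕ):ℚ) * (2*m-j) = ((2*m-j).choose m : ℕ) * ((m:ℚ)-j) := by
      obtain ⟨d, rfl⟩ : ∃ d, m = j+1+d := ⟨m-(j+1), by omega⟩
      have := Nat.choose_mul_succ_eq (j+1+2*d) (j+1+d)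
      have e1 : 2*(j+1+d)-(j+1) = j+1+2*d := by omega
      have e2 : 2*(j+1+d)-j = j+1+2*d+1 := by omega
      have e3 : j+1+2*d+1 - (j+1+d) = d+1 := by omega
      rw [e3] at this
      rw [e1, e2]
      have := congrArg (Nat.cast : ℕ → ℚ) this
      push_cast at this ⊢
      linear_combination this
    linear_combination (2*(m:ℚ)-j) * (((2*m-(j+1)).choose m : ℕ):ℚ) * h1 + ((m:ℚ)+ν-j) * gb (m+ν) j * h2
  · subst h; simp
  · rw [if_neg (by omega), if_neg (by omega)]; simp

theorem pcq_zero (ν : ℚ) (m : ℕ) : pcq ν m 0 = ((2*m).choose m : ℕ) := by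
  simp [pcq, gb_zero]

theorem pcq_abs_le (ν : ℚ) (hν : |ν| ≤ 1) (m j : ℕ) : |pcq ν m j| ≤ 2 * 8^m := by
  unfold pcq
  split_ifs with h
  · rw [abs_mul]
    have h1 := gb_abs_le m j h ν hν
    have h2 : (((m+1).choose j : ℕ):ℚ) ≤ 2^(m+1) := by exact_mod_cast Nat.choose_le_two_pow _ _
    have h3 : (((2*m-j).choose m : ℕ):ℚ) ≤ 2^(2*m) := by
      have := Nat.choose_le_two_pow (2*m-j) m
      have h4 : 2^(2*m-j) ≤ 2^(2*m) := Nat.pow_le_pow_right (by norm_num) (by omega)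
      exact_mod_cast this.trans h4
    rw [Nat.abs_cast]
    calc |gb (m+ν) j| * (((2*m-j).choose m : ℕ):ℚ) ≤ 2^(m+1) * 2^(2*m) := by
          apply mul_le_mul (h1.trans h2) h3 (by positivity) (by positivity)
      _ = 2 * 8^m := by rw [pow_mul, pow_succ, show (8:ℚ) = 2 * 2^2 by norm_num, mul_pow]; ring
  · simp

theorem pcq_int (a : ℤ) (m j : ℕ) : ∃ z : ℤ, (z:ℚ) = 9^m * pcq ((a:ℚ)/3) m j := by
  unfold pcq
  split_ifs with h
  · obtain ⟨w, hw⟩ := fact_dvd_prod (3*m+a) j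
    refine ⟨9^(m-j) * (w * ((2*m-j).choose m : ℕ)), ?_⟩
    have e : (9:ℚ)^m = 9^(m-j) * 9^j := by rw [← pow_add]; congr 1; omega
    rw [e]; push_cast
    have : 9^j * gb (m+(a:ℚ)/3) j = w := by
      have h1 : gb (m+(a:ℚ)/3) j * (3^j * j.factorial) = ∏ i ∈ Finset.range j, (3*(m:ℚ)+a - 3*i) := by
        unfold gb
        have : (3:ℚ)^j * j.factorial = ∏ i ∈ Finset.range j, (3 * ((i:ℚ)+1)) := by
          rw [Finset.prod_mul_distrib, Finset.prod_const, Finset.card_range, ← Finset.prod_range_add_one_eq_factorial]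
          push_cast; rfl
        rw [this, ← Finset.prod_mul_distrib]
        apply Finset.prod_congr rfl
        intro i _
        field_simp
      have h2 := congrArg (Int.cast : ℤ → ℚ) hw
      push_cast at h2
      rw [← h1] at h2
      have hf : ((j.factorial:ℕ):ℚ) ≠ 0 := by exact_mod_cast Nat.factorial_ne_zero j
      apply mul_left_cancel₀ hf
      rw [← h2, show (9:ℚ) = 3*3 by norm_num, mul_pow]; ring
    rw [← this]; ring
  · exact ⟨0, by simp⟩

theorem exists_pade (a : ℤ) (m : ℕ) : ∃ P : Polynomial ℤ, P.natDegree ≤ m ∧ ∀ j, (P.coeff j : ℚ) = 9^m * pcq ((a:ℚ)/3) m j := by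
  choose z hz using fun j => pcq_int a m j
  refine ⟨∑ j ∈ Finset.range (m+1), Polynomial.C (z j) * Polynomial.X^j, ?_, ?_⟩
  · apply Polynomial.natDegree_sum_le_of_forall_le
    intro i hi
    exact (Polynomial.natDegree_C_mul_X_pow_le _ _).trans (by simp at hi; omega)
  · intro j
    rw [Polynomial.finsetSum_coeff]
    simp only [Polynomial.coeff_C_mul, Polynomial.coeff_X_pow, mul_ite, mul_one, mul_zero, Finset.sum_ite_eq, Finset.mem_range]
    split_ifs with h
    · exact hz j
    · unfold pcq; rw [if_neg (by omega)]; simp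

theorem exists_pade2 (ν : ℚ) (a : ℤ) (h : ν = (a:ℚ)/3) (m : ℕ) : ∃ P : Polynomial ℤ, P.natDegree ≤ m ∧ ∀ j, (P.coeff j : ℚ) = 9^m * pcq ν m j := by
  subst h; exact exists_pade a m

theorem exists_pade_pos (m : ℕ) : ∃ P : Polynomial ℤ, P.natDegree ≤ m ∧ ∀ j, (P.coeff j : ℚ) = 9^m * pcq (1/3) m j :=
  exists_pade2 _ 1 (by norm_num) m
theorem exists_pade_neg (m : ℕ) : ∃ P : Polynomial ℤ, P.natDegree ≤ m ∧ ∀ j, (P.coeff j : ℚ) = 9^m * pcq (-(1/3)) m j :=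
  exists_pade2 _ (-1) (by norm_num) m

noncomputable def PP (m : ℕ) : Polynomial ℤ := (exists_pade_pos m).choose
noncomputable def QQ (m : ℕ) : Polynomial ℤ := (exists_pade_neg m).choose

theorem PP_deg (m : ℕ) : (PP m).natDegree ≤ m := (exists_pade_pos m).choose_spec.1
theorem QQ_deg (m : ℕ) : (QQ m).natDegree ≤ m := (exists_pade_neg m).choose_spec.1
theorem PP_coeff (m j : ℕ) : ((PP m).coeff j : ℚ) = 9^m * pcq (1/3) m j := (exists_pade_pos m).choose_spec.2 j
theorem QQ_coeff (m j : ℕ) : ((QQ m).coeff j : ℚ) = 9^m * pcq (-(1/3)) m j := (exists_pade_neg m).choose_spec.2 j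

theorem PP_abs (m j : ℕ) : |((PP m).coeff j : ℚ)| ≤ 2*72^m := by
  rw [PP_coeff, abs_mul, abs_of_pos (by positivity)]
  have := pcq_abs_le (1/3) (by norm_num [abs_le]) m j
  calc _ ≤ (9:ℚ)^m * (2*8^m) := by gcongr
    _ = _ := by rw [show (72:ℚ) = 9*8 by norm_num, mul_pow]; ring
theorem QQ_abs (m j : ℕ) : |((QQ m).coeff j : ℚ)| ≤ 2*72^m := by
  rw [QQ_coeff, abs_mul, abs_of_pos (by positivity)]
  have := pcq_abs_le (-(1/3)) (by norm_num [abs_le]) m j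
  calc _ ≤ (9:ℚ)^m * (2*8^m) := by gcongr
    _ = _ := by rw [show (72:ℚ) = 9*8 by norm_num, mul_pow]; ring

open PowerSeries in
noncomputable def fser : ℚ⟦X⟧ := PowerSeries.mk (gb (1/3))

open PowerSeries in
theorem fser_ode : (1+X) * derivative ℚ fser = C (1/3) * fser := by
  ext j
  rw [add_mul, one_mul, map_add, coeff_C_mul]
  rcases j with _ | j
  · simp [fser, coeff_derivative]
    have := gb_succ (1/3) 0
    simp [gb_zero] at this ⊢; linarith
  · rw [coeff_succ_X_mul]
    simp only [fser, coeff_derivative, coeff_mk]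
    have := gb_succ (1/3) (j+1)
    push_cast at this ⊢
    linear_combination this

open PowerSeries in
theorem pade_vanish (m j : ℕ) (hj : j ≤ 2*m) :
    coeff j (fser * PowerSeries.mk (pcq (-(1/3)) m)) = pcq (1/3) m j := by
  have hQ := (pade_ode_iff (-(1/3)) m (PowerSeries.mk (pcq (-(1/3)) m))).2 (by
    intro j; rw [coeff_mk, coeff_mk]; exact pcq_rec _ m j)
  have hy := (pade_ode_iff (1/3) m _).1 (pade_ode (1/3) m fser _ fser_ode (by
    simpa only [sub_eq_add_neg] using hQ))
  induction j with
  | zero =>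
    simp [fser, gb_zero, pcq_zero]
  | succ j ih =>
    have h1 := hy j
    have h2 := pcq_rec (1/3) m j
    rw [ih (by omega), ← h2] at h1
    have h3 : ((j:ℚ)+1)*(2*m-j) ≠ 0 := by
      apply mul_ne_zero (by positivity)
      have : ((j+1:ℕ):ℚ) ≤ ((2*m:ℕ):ℚ) := by exact_mod_cast hj
      push_cast at this
      linarith
    exact mul_left_cancel₀ h3 h1
theorem gb_shift (α : ℚ) (j : ℕ) : ((j:ℚ)+1) * gb (α+1) (j+1) = (α+1) * gb α j := by
  induction j with
  | zero => simp [gb]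
  | succ j ih =>
    have h1 := gb_succ (α+1) (j+1)
    have h2 := gb_succ α j
    push_cast at *
    have h0 : ((j:ℚ)+1) ≠ 0 := by positivity
    apply mul_left_cancel₀ h0
    linear_combination ((j:ℚ)+1) * h1 + (α - j) * ih - (α+1) * h2

theorem gb_diag_ne (ν : ℚ) (h : |ν| < 1) (m : ℕ) : gb (m+ν) m ≠ 0 := by
  unfold gb
  rw [Finset.prod_ne_zero_iff]
  intro i hi
  have : ((i:ℚ)+1) ≤ m := by exact_mod_cast Finset.mem_range.1 hi
  rw [abs_lt] at h
  have h2 : (m:ℚ)+ν-i ≠ 0 := by linarith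
  positivity

open PowerSeries in
noncomputable def Pq (m : ℕ) : ℚ⟦X⟧ := (((PP m).map (Int.castRingHom ℚ) : Polynomial ℚ) : ℚ⟦X⟧)
open PowerSeries in
noncomputable def Qq (m : ℕ) : ℚ⟦X⟧ := (((QQ m).map (Int.castRingHom ℚ) : Polynomial ℚ) : ℚ⟦X⟧)

open PowerSeries in
theorem Pq_coeff (m j : ℕ) : coeff j (Pq m) = 9^m * pcq (1/3) m j := by
  rw [← PP_coeff]; simp [Pq]
open PowerSeries in
theorem Qq_coeff (m j : ℕ) : coeff j (Qq m) = 9^m * pcq (-(1/3)) m j := by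
  rw [← QQ_coeff]; simp [Qq]

open PowerSeries in
theorem pade_dvd (m : ℕ) : (X : ℚ⟦X⟧)^(2*m+1) ∣ fser * Qq m - Pq m := by
  rw [X_pow_dvd_iff]
  intro j hj
  have h : Qq m = C (9^m) * PowerSeries.mk (pcq (-(1/3)) m) := by
    ext i; rw [Qq_coeff, coeff_C_mul, coeff_mk]
  rw [map_sub, h, mul_left_comm, coeff_C_mul, pade_vanish m j (by omega), Pq_coeff, sub_self]

open Polynomial in
theorem pade_det (m : ℕ) : ∃ κ : ℤ, κ ≠ 0 ∧ PP m * QQ (m+1) - PP (m+1) * QQ m = C κ * X^(2*m+1) := by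
  set D := PP m * QQ (m+1) - PP (m+1) * QQ m with hD
  refine ⟨D.coeff (2*m+1), ?_, ?_⟩
  · have h1 : (PP m * QQ (m+1)).coeff (2*m+1) = (PP m).coeff m * (QQ (m+1)).coeff (m+1) := by
      rw [show 2*m+1 = m+(m+1) by ring]
      exact coeff_mul_add_eq_of_natDegree_le (PP_deg m) (QQ_deg _)
    have h2 : (PP (m+1) * QQ m).coeff (2*m+1) = (PP (m+1)).coeff (m+1) * (QQ m).coeff m := by
      rw [show 2*m+1 = (m+1)+m by ring]
      exact coeff_mul_add_eq_of_natDegree_le (PP_deg _) (QQ_deg _)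
    rw [hD, coeff_sub, h1, h2]
    intro h
    have h3 := congrArg (Int.cast : ℤ → ℚ) h
    push_cast at h3
    rw [PP_coeff, PP_coeff, QQ_coeff, QQ_coeff] at h3
    simp only [pcq, le_refl, if_true] at h3
    have e1 : 2*m - m = m := by omega
    have e2 : 2*(m+1) - (m+1) = m+1 := by omega
    rw [e1, e2, Nat.choose_self, Nat.choose_self] at h3
    push_cast at h3
    have s1 := gb_shift (m + 1/3) m
    have s2 := gb_shift (m + -(1/3)) m
    rw [show (m:ℚ) + 1/3 + 1 = m + 1 + 1/3 by ring] at s1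
    rw [show (m:ℚ) + -(1/3) + 1 = m + 1 + -(1/3) by ring] at s2
    have n1 := gb_diag_ne (1/3) (by norm_num [abs_lt]) m
    have n2 := gb_diag_ne (-(1/3)) (by norm_num [abs_lt]) m
    have h4 : (9:ℚ)^m * 9^(m+1) * (gb (m+1/3) m * gb (m + -(1/3)) m) * (-(2/3)) = 0 := by
      linear_combination ((m:ℚ)+1) * h3 - (9:ℚ)^m * 9^(m+1) * gb (m+1/3) m * s2 + (9:ℚ)^m * 9^(m+1) * gb (m + -(1/3)) m * s1
    have : (9:ℚ)^m * 9^(m+1) * (gb (m+1/3) m * gb (m + -(1/3)) m) * (-(2/3)) ≠ 0 := by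
      refine mul_ne_zero (mul_ne_zero (by positivity) (mul_ne_zero n1 n2)) (by norm_num)
    exact this h4
  · have hd : (PowerSeries.X : PowerSeries ℚ)^(2*m+1) ∣ ((D.map (Int.castRingHom ℚ) : ℚ[X]) : PowerSeries ℚ) := by
      have e : ((D.map (Int.castRingHom ℚ) : ℚ[X]) : PowerSeries ℚ) = (fser * Qq (m+1) - Pq (m+1)) * Qq m - (fser * Qq m - Pq m) * Qq (m+1) := by
        rw [hD]; simp only [Polynomial.map_sub, Polynomial.map_mul, Polynomial.coe_sub, Polynomial.coe_mul]
        change Pq m * Qq (m+1) - Pq (m+1) * Qq m = _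
        ring
      rw [e]
      apply dvd_sub
      · exact ((pow_dvd_pow _ (by omega)).trans (pade_dvd (m+1))).mul_right _
      · exact (pade_dvd m).mul_right _
    ext j
    rw [coeff_C_mul, coeff_X_pow]
    rcases lt_trichotomy j (2*m+1) with h | h | h
    · have := (PowerSeries.X_pow_dvd_iff.1 hd) j h
      simp only [Polynomial.coeff_coe, coeff_map, eq_intCast] at this
      rw [if_neg (by omega)]
      simpa using this
    · subst h; simp
    · rw [if_neg (by omega), mul_zero]
      apply coeff_eq_zero_of_natDegree_lt
      refine lt_of_le_of_lt ?_ h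
      apply (natDegree_sub_le _ _).trans
      apply max_le
      · exact natDegree_mul_le.trans (by have := PP_deg m; have := QQ_deg (m+1); omega)
      · exact natDegree_mul_le.trans (by have := PP_deg (m+1); have := QQ_deg m; omega)

open PowerSeries in
theorem fser_cube : fser^3 = 1 + X := by
  have h : (1+X) * derivative ℚ (fser^3) = fser^3 := by
    rw [derivative_pow]
    have := fser_ode
    have e : (3:ℚ⟦X⟧) * C (1/3) = 1 := by
      have e3 : (C (3:ℚ)) = (3:ℚ⟦X⟧) := map_ofNat C 3
      rw [← e3, ← map_mul]; norm_num
    linear_combination (3*fser^2) * this + fser^3 * e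
  set H := fser^3
  have h0 : coeff 0 H = 1 := by
    simp [H, fser, gb_zero]
  have hr : ∀ j : ℕ, ((j:ℚ)+1) * coeff (j+1) H = (1 - j) * coeff j H := by
    intro j
    have := congrArg (coeff j) h
    rw [add_mul, one_mul, map_add, coeff_derivative] at this
    rcases j with _ | j
    · simp at this ⊢; linarith
    · rw [coeff_succ_X_mul, coeff_derivative] at this
      push_cast at *
      linear_combination this
  have h1 : coeff 1 H = 1 := by
    have := hr 0; rw [h0] at this; simpa using this
  have h2 : ∀ j, coeff (j+2) H = 0 := by
    intro j
    induction j with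
    | zero => have := hr 1; rw [h1] at this; simp at this; simpa using this
    | succ j ih =>
      have := hr (j+2); rw [ih, mul_zero] at this
      have h3 : (((j+2:ℕ):ℚ)+1) ≠ 0 := by positivity
      exact (mul_eq_zero.1 this).resolve_left h3
  ext j
  rcases j with _ | _ | j
  · simp [h0]
  · simp [h1, coeff_one]
  · rw [h2, map_add, coeff_one, coeff_X]; simp
open PowerSeries in
/-- evaluation of a rational power series at a complex number -/
noncomputable def evs (F : ℚ⟦X⟧) (z : ℂ) : ℂ := ∑' j, ((coeff j F : ℚ) : ℂ) * z^j

open PowerSeries in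
def evSum (F : ℚ⟦X⟧) (z : ℂ) : Prop := Summable (fun j => ‖((coeff j F : ℚ) : ℂ) * z^j‖)

open PowerSeries in
theorem evs_mul (F G : ℚ⟦X⟧) (z : ℂ) (hF : evSum F z) (hG : evSum G z) :
    evSum (F*G) z ∧ evs (F*G) z = evs F z * evs G z := by
  have e : ∀ n, ((coeff n (F*G) : ℚ) : ℂ) * z^n = ∑ kl ∈ Finset.HasAntidiagonal.antidiagonal n, (((coeff kl.1 F : ℚ) : ℂ) * z^kl.1) * (((coeff kl.2 G : ℚ) : ℂ) * z^kl.2) := by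
    intro n
    rw [coeff_mul]; push_cast
    rw [Finset.sum_mul]
    apply Finset.sum_congr rfl
    intro kl h
    rw [← Finset.HasAntidiagonal.mem_antidiagonal.1 h, pow_add]; ring
  constructor
  · unfold evSum
    simp_rw [e]
    exact summable_norm_sum_mul_antidiagonal_of_summable_norm
      (f := fun j => ((coeff j F : ℚ) : ℂ) * z^j) (g := fun j => ((coeff j G : ℚ) : ℂ) * z^j) hF hG
  · unfold evs
    simp_rw [e]
    exact (tsum_mul_tsum_eq_tsum_sum_antidiagonal_of_summable_norm
      (f := fun j => ((coeff j F : ℚ) : ℂ) * z^j) (g := fun j => ((coeff j G : ℚ) : ℂ) * z^j) hF hG).symm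

open PowerSeries in
theorem evSum_of_bdd (F : ℚ⟦X⟧) (M : ℝ) (hM : ∀ j, |((coeff j F : ℚ):ℝ)| ≤ M) (z : ℂ) (hz : ‖z‖ ≤ 1/2) :
    evSum F z ∧ ‖evs F z‖ ≤ 2 * M := by
  have hg : HasSum (fun j : ℕ => M * (1/2:ℝ)^j) (M*2) := hasSum_geometric_two.mul_left M
  have hb : ∀ j, ‖((coeff j F : ℚ) : ℂ) * z^j‖ ≤ M * (1/2:ℝ)^j := by
    intro j
    rw [norm_mul, norm_pow]
    have : ‖((coeff j F : ℚ) : ℂ)‖ = |((coeff j F : ℚ):ℝ)| := by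
      rw [show ((coeff j F : ℚ) : ℂ) = (((coeff j F : ℚ):ℝ):ℂ) by push_cast; rfl, Complex.norm_real, Real.norm_eq_abs]
    rw [this]
    have h0 : 0 ≤ M := (abs_nonneg _).trans (hM 0)
    gcongr
    exact hM j
  refine ⟨Summable.of_nonneg_of_le (fun _ => norm_nonneg _) hb hg.summable, ?_⟩
  have := tsum_of_norm_bounded hg hb
  unfold evs; linarith

open PowerSeries in
theorem evs_poly (P : Polynomial ℤ) (z : ℂ) :
    evSum ((P.map (Int.castRingHom ℚ) : Polynomial ℚ) : ℚ⟦X⟧) z ∧ evs ((P.map (Int.castRingHom ℚ) : Polynomial ℚ) : ℚ⟦X⟧) z = Polynomial.aeval z P := by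
  have h0 : ∀ j ∉ Finset.range (P.natDegree+1), ((coeff j ((P.map (Int.castRingHom ℚ) : Polynomial ℚ) : ℚ⟦X⟧) : ℚ) : ℂ) * z^j = 0 := by
    intro j hj
    simp only [Polynomial.coeff_coe, Polynomial.coeff_map, eq_intCast]
    rw [Polynomial.coeff_eq_zero_of_natDegree_lt (by simp at hj; omega)]; simp
  constructor
  · apply summable_of_ne_finset_zero (s := Finset.range (P.natDegree+1))
    intro j hj; rw [h0 j hj, norm_zero]
  · unfold evs
    rw [tsum_eq_sum h0, Polynomial.aeval_eq_sum_range]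
    apply Finset.sum_congr rfl
    intro j _
    simp

noncomputable def gfun (z : ℂ) : ℂ := evs fser z

theorem fser_bdd (j : ℕ) : |((PowerSeries.coeff j fser : ℚ):ℝ)| ≤ 1 := by
  rw [fser, PowerSeries.coeff_mk]; exact_mod_cast gb_abs_le_one j

theorem gfun_cube (z : ℂ) (hz : ‖z‖ ≤ 1/2) : gfun z ^ 3 = 1 + z := by
  have hs := (evSum_of_bdd fser 1 fser_bdd z hz).1
  obtain ⟨s2, e2⟩ := evs_mul fser fser z hs hs
  obtain ⟨s3, e3⟩ := evs_mul (fser*fser) fser z s2 hs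
  have h1 : evs (fser*fser*fser) z = gfun z^3 := by rw [e3, e2]; unfold gfun; ring
  rw [← h1, show fser*fser*fser = fser^3 by ring, fser_cube]
  have := (evs_poly (1+Polynomial.X) z).2
  simpa using this

open PowerSeries in
theorem evs_X_pow_mul (F : ℚ⟦X⟧) (n : ℕ) (z : ℂ) (hF : evSum F z) : evs (X^n*F) z = z^n * evs F z := by
  have h := evs_poly (Polynomial.X^n) z
  simp only [Polynomial.map_pow, Polynomial.map_X, Polynomial.coe_pow, Polynomial.coe_X, map_pow, Polynomial.aeval_X] at h
  rw [(evs_mul _ F z h.1 hF).2, h.2]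

open PowerSeries in
theorem evs_sub (F G : ℚ⟦X⟧) (z : ℂ) (hF : evSum F z) (hG : evSum G z) : evs (F-G) z = evs F z - evs G z := by
  unfold evs
  rw [← Summable.tsum_sub hF.of_norm hG.of_norm]
  congr 1; ext j; rw [map_sub]; push_cast; ring

open PowerSeries in
theorem gfun_sub_one (z : ℂ) (hz : ‖z‖ ≤ 1/2) : ‖gfun z - 1‖ ≤ 2 * ‖z‖ := by
  have hs := (evSum_of_bdd fser 1 fser_bdd z hz).1
  have h1 := evs_poly 1 z
  simp only [Polynomial.map_one, Polynomial.coe_one, map_one] at h1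
  have hd := evs_sub fser 1 z hs h1.1
  rw [h1.2] at hd
  unfold gfun
  rw [← hd]
  have : (X:ℚ⟦X⟧)^1 ∣ fser - 1 := by
    rw [X_pow_dvd_iff]; intro j hj
    have : j = 0 := by omega
    subst this; simp [fser, gb_zero]
  obtain ⟨h, hh⟩ := this
  have hc : ∀ j, |((coeff j h : ℚ):ℝ)| ≤ 1 := by
    intro j
    have e : coeff j h = coeff (j+1) fser := by
      have := congrArg (coeff (j+1)) hh
      rw [pow_one, coeff_succ_X_mul, map_sub, coeff_one] at this
      simpa using this.symm
    rw [e]; exact fser_bdd _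
  have hb := evSum_of_bdd h 1 hc z hz
  rw [hh, evs_X_pow_mul _ _ _ hb.1, norm_mul, pow_one]
  nlinarith [hb.2, norm_nonneg z]

open PowerSeries in
theorem pade_rem (m : ℕ) (z : ℂ) (hz : ‖z‖ ≤ 1/2) :
    ‖gfun z * Polynomial.aeval z (QQ m) - Polynomial.aeval z (PP m)‖ ≤ 8 * 144^m * ‖z‖^(2*m+1) := by
  have hs := (evSum_of_bdd fser 1 fser_bdd z hz).1
  have hQ := evs_poly (QQ m) z
  have hP := evs_poly (PP m) z
  change evSum (Qq m) z ∧ evs (Qq m) z = _ at hQ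
  change evSum (Pq m) z ∧ evs (Pq m) z = _ at hP
  have hm := evs_mul fser (Qq m) z hs hQ.1
  have hd := evs_sub _ (Pq m) z hm.1 hP.1
  rw [hm.2, hQ.2, hP.2] at hd
  unfold gfun
  rw [← hd]
  obtain ⟨h, hh⟩ := pade_dvd m
  have hc : ∀ j, |((coeff j h : ℚ):ℝ)| ≤ 4*144^m := by
    intro j
    have e : coeff j h = coeff (j+(2*m+1)) (fser * Qq m - Pq m) := by
      rw [hh, coeff_X_pow_mul]
    rw [e]
    have h1 : |coeff (j+(2*m+1)) (fser * Qq m)| ≤ (m+1) * (2*72^m) := by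
      rw [mul_comm fser, coeff_mul, Finset.Nat.sum_antidiagonal_eq_sum_range_succ (fun i k => coeff i (Qq m) * coeff k fser)]
      have hsub : Finset.range (m+1) ⊆ Finset.range (j+(2*m+1)).succ := by
        intro i; simp; omega
      rw [← Finset.sum_subset hsub]
      · refine (Finset.abs_sum_le_sum_abs _ _).trans ?_
        refine (Finset.sum_le_card_nsmul _ _ (2*72^m) ?_).trans (by simp)
        intro i _
        rw [abs_mul]
        have a1 : |coeff i (Qq m)| ≤ 2*72^m := by
          have := QQ_abs m i
          rw [Qq_coeff, ← QQ_coeff]; exact this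
        have a2 := gb_abs_le_one (j+(2*m+1)-i)
        have a3 : |coeff (j+(2*m+1)-i) fser| ≤ 1 := by rw [fser, coeff_mk]; exact a2
        calc _ ≤ (2*72^m : ℚ) * 1 := mul_le_mul a1 a3 (abs_nonneg _) (by positivity)
          _ = _ := by ring
      · intro i _ hi
        rw [Qq_coeff, pcq, if_neg (by simp at hi; omega)]; simp
    have h2 : |coeff (j+(2*m+1)) (Pq m)| ≤ 2*72^m := by
      rw [Pq_coeff, ← PP_coeff]; exact PP_abs _ _
    have h3 : (m:ℚ)+2 ≤ 2*2^m := by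
      have : m + 2 ≤ 2*2^m := by
        have : m + 1 ≤ 2^m := Nat.lt_two_pow_self
        have : 1 ≤ 2^m := Nat.one_le_two_pow
        omega
      exact_mod_cast this
    have h4 : |coeff (j+(2*m+1)) (fser * Qq m - Pq m)| ≤ 4*144^m := by
      rw [map_sub]
      refine (abs_sub _ _).trans ?_
      have : (144:ℚ)^m = 2^m*72^m := by rw [← mul_pow]; norm_num
      rw [this]
      nlinarith [show (0:ℚ) < 72^m by positivity]
    exact_mod_cast h4
  have hb := evSum_of_bdd h _ hc z hz
  rw [hh, evs_X_pow_mul _ _ _ hb.1, norm_mul, norm_pow]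
  nlinarith [hb.2, show 0 ≤ ‖z‖^(2*m+1) by positivity]

theorem PP_bound (m : ℕ) (z : ℂ) (hz : ‖z‖ ≤ 1/2) : ‖Polynomial.aeval z (PP m)‖ ≤ 4 * 72^m := by
  have hP := evs_poly (PP m) z
  rw [← hP.2]
  refine (evSum_of_bdd _ (2*72^m) ?_ z hz).2.trans (by linarith)
  intro j
  have := PP_abs m j
  simp only [Polynomial.coeff_coe, Polynomial.coeff_map, eq_intCast]
  exact_mod_cast this
theorem integral_pow_prod {ι : Type*} [Fintype ι] [DecidableEq ι] (x : ι → ℂ) (D : ℕ)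
    (h : ∀ I : Finset ι, IsIntegral ℤ ((D:ℂ) * ∏ σ ∈ I, x σ)) (N : ℕ) (j : ι → ℕ) (hj : ∀ σ, j σ ≤ N) :
    IsIntegral ℤ ((D:ℂ)^N * ∏ σ, x σ ^ j σ) := by
  have e : (D:ℂ)^N * ∏ σ, x σ ^ j σ = ∏ i ∈ Finset.range N, ((D:ℂ) * ∏ σ ∈ Finset.univ.filter (fun σ => i < j σ), x σ) := by
    rw [Finset.prod_mul_distrib, Finset.prod_const, Finset.card_range]
    congr 1
    simp_rw [Finset.prod_filter]
    rw [Finset.prod_comm]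
    apply Finset.prod_congr rfl
    intro σ _
    rw [← Finset.prod_filter, Finset.prod_const]
    congr 1
    have : (Finset.range N).filter (fun i => i < j σ) = Finset.range (j σ) := by
      ext i; simp; have := hj σ; omega
    rw [this, Finset.card_range]
  rw [e]
  exact IsIntegral.prod _ (fun i _ => h _)

theorem integral_expand {ι : Type*} [Fintype ι] [DecidableEq ι] (x y : ι → ℂ) (D E : ℕ)
    (hx : ∀ I : Finset ι, IsIntegral ℤ ((D:ℂ) * ∏ σ ∈ I, x σ))
    (hy : ∀ I : Finset ι, IsIntegral ℤ ((E:ℂ) * ∏ σ ∈ I, y σ)) (N : ℕ)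
    (p q : Polynomial (integralClosure ℤ ℂ)) (hp : p.natDegree ≤ N) (hq : q.natDegree ≤ N) :
    IsIntegral ℤ ((D:ℂ)^N * E * ∏ σ, (Polynomial.aeval (x σ) p + y σ * Polynomial.aeval (x σ) q)) := by
  let a : ℕ × ℕ → ℂ := fun i => if i.2 = 0 then (p.coeff i.1 : ℂ) else (q.coeff i.1 : ℂ)
  have e : ∀ σ, Polynomial.aeval (x σ) p + y σ * Polynomial.aeval (x σ) q =
      ∑ i ∈ Finset.range (N+1) ×ˢ Finset.range 2, a i * (x σ ^ i.1 * y σ ^ i.2) := by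
    intro σ
    rw [Finset.sum_product_right, Finset.sum_range_succ, Finset.sum_range_one,
      Polynomial.aeval_eq_sum_range' (show p.natDegree < N+1 by omega),
      Polynomial.aeval_eq_sum_range' (show q.natDegree < N+1 by omega), Finset.mul_sum]
    congr 1
    · apply Finset.sum_congr rfl; intro i _; simp [a, Algebra.smul_def]
    · apply Finset.sum_congr rfl; intro i _; simp [a, Algebra.smul_def]; ring
  simp_rw [e]
  rw [Finset.prod_univ_sum, Finset.mul_sum]
  apply IsIntegral.sum
  intro f hf
  rw [Fintype.mem_piFinset] at hf
  rw [Finset.prod_mul_distrib, Finset.prod_mul_distrib]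
  have h1 := integral_pow_prod x D hx N (fun σ => (f σ).1) (fun σ => by
    have := hf σ; simp at this; omega)
  have h2 := integral_pow_prod y E hy 1 (fun σ => (f σ).2) (fun σ => by
    have := hf σ; simp at this; omega)
  have h3 : IsIntegral ℤ (∏ σ, a (f σ)) := by
    apply IsIntegral.prod
    intro σ _
    simp only [a]; split_ifs
    · exact (p.coeff _).2
    · exact (q.coeff _).2
  have := (h1.mul h2).mul h3
  convert this using 1
  ring

theorem one_le_of_integral_rat (q : ℚ) (hq : q ≠ 0) (h : IsIntegral ℤ (q:ℂ)) : 1 ≤ |q| := by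
  have h2 : IsIntegral ℤ q := by
    have : (algebraMap ℚ ℂ q) = (q:ℂ) := by simp
    rw [← this] at h
    exact (isIntegral_algebraMap_iff (algebraMap ℚ ℂ).injective).1 h
  obtain ⟨z, hz⟩ := IsIntegrallyClosed.isIntegral_iff.1 h2
  have hz' : (z:ℚ) = q := by simpa using hz
  rw [← hz'] at hq ⊢
  have : z ≠ 0 := by exact_mod_cast hq
  exact_mod_cast Int.one_le_abs this

theorem norm_lower {F : Type*} [Field F] [NumberField F] (Θ : F) (hΘ : Θ ≠ 0) (D : ℕ) (hD : 0 < D)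
    (h : IsIntegral ℤ ((D:ℂ) * ∏ σ : F →ₐ[ℚ] ℂ, σ Θ)) :
    (1:ℝ) ≤ D * ∏ σ : F →ₐ[ℚ] ℂ, ‖σ Θ‖ := by
  have h1 := Algebra.norm_eq_prod_embeddings ℚ ℂ Θ
  rw [← h1] at h
  have h2 : ((D * Algebra.norm ℚ Θ : ℚ):ℂ) = (D:ℂ) * algebraMap ℚ ℂ (Algebra.norm ℚ Θ) := by
    push_cast; simp
  rw [← h2] at h
  have h3 := one_le_of_integral_rat _ (mul_ne_zero (by exact_mod_cast hD.ne') (Algebra.norm_ne_zero_iff.2 hΘ)) h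
  have h4 : ∏ σ : F →ₐ[ℚ] ℂ, ‖σ Θ‖ = |((Algebra.norm ℚ Θ : ℚ):ℝ)| := by
    rw [← norm_prod, ← h1]
    simp
  rw [h4]
  rw [abs_mul, Nat.abs_cast] at h3
  exact_mod_cast h3
noncomputable def gam : ℝ := (3:ℝ)^((1:ℝ)/3)

theorem gam_cube : gam^3 = 3 := by
  unfold gam
  rw [← Real.rpow_natCast, ← Real.rpow_mul (by norm_num)]; norm_num

theorem gam_gt : 1 < gam := by
  unfold gam; exact Real.one_lt_rpow (by norm_num) (by norm_num)

theorem gam_pos : 0 < gam := lt_trans one_pos gam_gt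

theorem gam_cubeC : (gam:ℂ)^3 = 3 := by exact_mod_cast gam_cube

theorem gam_int : IsIntegral ℤ (gam:ℂ) := by
  apply IsIntegral.of_pow (n := 3) (by norm_num)
  rw [gam_cubeC]
  exact_mod_cast isIntegral_algebraMap (R := ℤ) (A := ℂ) (x := 3)

def TSol (F : Type*) [Field F] [NumberField F] (k b : ℕ) (t : F) (D : ℕ) : Prop :=
  1 ≤ b ∧ 21*b ≤ k ∧ (3:F)^k*t^3+1 = 9^b*(3^k*t+1)^3 ∧ 0 < D ∧
  (D:ℝ) ≤ 3*gam^(2*Module.finrank ℚ F*k)*9^b ∧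
  ∀ I : Finset (F →ₐ[ℚ] ℂ), IsIntegral ℤ ((D:ℂ)*∏ σ ∈ I, (gam:ℂ)^k*σ t)

theorem root_bound (k b : ℕ) (hb : 1 ≤ b) (hk : 3 ≤ k) (x : ℂ) (h : (3:ℂ)^k*x^3+1 = 9^b*(3^k*x+1)^3) :
    ‖(gam:ℂ)^k * x‖ * gam^(2*k) ≤ 2 := by
  set s := (gam:ℂ)^k * x with hs
  have hc : (3:ℝ) ≤ gam^(2*k) := by
    calc (3:ℝ) = gam^3 := gam_cube.symm
      _ ≤ gam^(2*k) := pow_le_pow_right₀ gam_gt.le (by omega)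
  have e1 : (3:ℂ)^k*x^3 = s^3 := by rw [hs, ← gam_cubeC]; ring
  have e2 : (3:ℂ)^k*x = (gam:ℂ)^(2*k)*s := by rw [hs, ← gam_cubeC]; ring
  rw [e1, e2] at h
  set v := (gam:ℂ)^(2*k)*s+1 with hv
  have hn : ‖(gam:ℂ)^(2*k)*s‖ = gam^(2*k) * ‖s‖ := by
    rw [norm_mul, norm_pow, Complex.norm_real, Real.norm_of_nonneg gam_pos.le]
  have h9 : (9:ℝ) * ‖v‖^3 ≤ ‖s‖^3 + 1 := by
    have h1 : ‖s^3+1‖ ≤ ‖s‖^3+1 := by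
      refine (norm_add_le _ _).trans ?_; rw [norm_pow]; simp
    rw [h, norm_mul, norm_pow, norm_pow] at h1
    have : (9:ℝ) ≤ ‖(9:ℂ)‖^b := by
      rw [show ‖(9:ℂ)‖ = 9 by simp]
      calc (9:ℝ) = 9^1 := by norm_num
        _ ≤ 9^b := pow_le_pow_right₀ (by norm_num) hb
    nlinarith [show 0 ≤ ‖v‖^3 by positivity]
  have hv2 : gam^(2*k) * ‖s‖ ≤ ‖v‖ + 1 := by
    rw [← hn]
    have : (gam:ℂ)^(2*k)*s = v - 1 := by rw [hv]; ring
    rw [this]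
    exact (norm_sub_le _ _).trans (by simp)
  have hs0 := norm_nonneg s
  have hv0 := norm_nonneg v
  have hs1 : ‖s‖ ≤ 1 := by
    by_contra hcon
    push Not at hcon
    have h3 : ‖s‖ ≤ ‖v‖ := by nlinarith
    have h4 : ‖s‖^3 ≤ ‖v‖^3 := by gcongr
    have h5 : 1 ≤ ‖s‖^3 := one_le_pow₀ hcon.le
    linarith
  have hv1 : ‖v‖ ≤ 1 := by
    by_contra hcon
    push Not at hcon
    have h5 : 1 ≤ ‖v‖^3 := one_le_pow₀ hcon.le
    have : ‖s‖^3 ≤ 1 := pow_le_one₀ hs0 hs1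
    linarith
  linarith

theorem z_bound (k b : ℕ) (hb : 1 ≤ b) (hk : 3 ≤ k) (x : ℂ) (h : (3:ℂ)^k*x^3+1 = 9^b*(3^k*x+1)^3) :
    ‖(3:ℂ)^k*x^3‖ * gam^(6*k) ≤ 8 ∧ ‖(3:ℂ)^k*x^3‖ ≤ 1/2 := by
  have h1 := root_bound k b hb hk x h
  have h2 : ‖(3:ℂ)^k*x^3‖ * gam^(6*k) ≤ 8 := by
    have e : ‖(3:ℂ)^k*x^3‖ * gam^(6*k) = (‖(gam:ℂ)^k * x‖ * gam^(2*k))^3 := by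
      rw [← gam_cubeC, norm_mul, norm_mul, norm_pow, norm_pow, norm_pow, norm_pow]; ring
    rw [e]
    calc _ ≤ (2:ℝ)^3 := pow_le_pow_left₀ (by have := gam_pos; positivity) h1 3
      _ = 8 := by norm_num
  refine ⟨h2, ?_⟩
  have h3 : (729:ℝ) ≤ gam^(6*k) := by
    calc (729:ℝ) = (gam^3)^6 := by rw [gam_cube]; norm_num
      _ = gam^18 := by rw [← pow_mul]
      _ ≤ _ := pow_le_pow_right₀ gam_gt.le (by omega)
  nlinarith [norm_nonneg ((3:ℂ)^k*x^3)]

/-- integrality of Theta norm -/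
theorem theta_integral {F : Type*} [Field F] [NumberField F] (k₁ k₂ e₁ e₂ D₁ D₂ m : ℕ) (t₁ t₂ : F)
    (h1 : ∀ I : Finset (F →ₐ[ℚ] ℂ), IsIntegral ℤ ((D₁:ℂ)*∏ σ ∈ I, (gam:ℂ)^k₁*σ t₁))
    (h2 : ∀ I : Finset (F →ₐ[ℚ] ℂ), IsIntegral ℤ ((D₂:ℂ)*∏ σ ∈ I, (gam:ℂ)^k₂*σ t₂)) :
    IsIntegral ℤ (((D₁^(3*m+1)*D₂ : ℕ):ℂ) * ∏ σ : F →ₐ[ℚ] ℂ,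
      σ (9^e₁*(3^k₁*t₁+1) * Polynomial.aeval (3^k₁*t₁^3) (QQ m) - 9^e₂*(3^k₂*t₂+1) * Polynomial.aeval (3^k₁*t₁^3) (PP m))) := by
  classical
  let g : integralClosure ℤ ℂ := ⟨gam, gam_int⟩
  let Q3 : Polynomial (integralClosure ℤ ℂ) := Polynomial.expand _ 3 ((QQ m).map (algebraMap ℤ _))
  let P3 : Polynomial (integralClosure ℤ ℂ) := Polynomial.expand _ 3 ((PP m).map (algebraMap ℤ _))
  have dQ : Q3.natDegree ≤ 3*m := by
    rw [Polynomial.natDegree_expand]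
    have := (QQ m).natDegree_map_le (f := algebraMap ℤ (integralClosure ℤ ℂ))
    have := QQ_deg m
    omega
  have dP : P3.natDegree ≤ 3*m := by
    rw [Polynomial.natDegree_expand]
    have := (PP m).natDegree_map_le (f := algebraMap ℤ (integralClosure ℤ ℂ))
    have := PP_deg m
    omega
  let p : Polynomial (integralClosure ℤ ℂ) := Polynomial.C (9^e₁) * (Polynomial.C (g^(2*k₁)) * Polynomial.X + 1) * Q3 - Polynomial.C (9^e₂) * P3
  let q : Polynomial (integralClosure ℤ ℂ) := - (Polynomial.C (9^e₂ * g^(2*k₂)) * P3)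
  have hp : p.natDegree ≤ 3*m+1 := by
    apply (Polynomial.natDegree_sub_le _ _).trans
    apply max_le
    · rw [mul_assoc]
      refine (Polynomial.natDegree_C_mul_le _ _).trans ?_
      refine Polynomial.natDegree_mul_le.trans ?_
      have : (Polynomial.C (g^(2*k₁)) * Polynomial.X + 1 : Polynomial (integralClosure ℤ ℂ)).natDegree ≤ 1 := by
        have := Polynomial.natDegree_linear_le (a := g^(2*k₁)) (b := 1)
        simpa using this
      omega
    · exact (Polynomial.natDegree_C_mul_le _ _).trans (by omega)
  have hq : q.natDegree ≤ 3*m+1 := by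
    rw [Polynomial.natDegree_neg]
    exact (Polynomial.natDegree_C_mul_le _ _).trans (by omega)
  have := integral_expand (fun σ : F →ₐ[ℚ] ℂ => (gam:ℂ)^k₁*σ t₁) (fun σ => (gam:ℂ)^k₂*σ t₂) D₁ D₂ h1 h2 (3*m+1) p q hp hq
  convert this using 1
  push_cast
  congr 1
  apply Finset.prod_congr rfl
  intro σ _
  have ag : algebraMap (integralClosure ℤ ℂ) ℂ g = gam := rfl
  have aP : Polynomial.aeval ((gam:ℂ)^k₁*σ t₁) P3 = Polynomial.aeval (3^k₁*(σ t₁)^3) (PP m) := by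
    simp only [P3, Polynomial.expand_aeval, Polynomial.aeval_map_algebraMap]
    congr 2
    rw [← gam_cubeC]; ring
  have aQ : Polynomial.aeval ((gam:ℂ)^k₁*σ t₁) Q3 = Polynomial.aeval (3^k₁*(σ t₁)^3) (QQ m) := by
    simp only [Q3, Polynomial.expand_aeval, Polynomial.aeval_map_algebraMap]
    congr 2
    rw [← gam_cubeC]; ring
  have s1 : σ (Polynomial.aeval (3^k₁*t₁^3) (QQ m)) = Polynomial.aeval (3^k₁*(σ t₁)^3) (QQ m) := by
    have := Polynomial.aeval_algHom_apply (σ.restrictScalars ℤ) (3^k₁*t₁^3) (QQ m)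
    simp at this; rw [map_ofNat] at this; exact this.symm
  have s2 : σ (Polynomial.aeval (3^k₁*t₁^3) (PP m)) = Polynomial.aeval (3^k₁*(σ t₁)^3) (PP m) := by
    have := Polynomial.aeval_algHom_apply (σ.restrictScalars ℤ) (3^k₁*t₁^3) (PP m)
    simp at this; rw [map_ofNat] at this; exact this.symm
  simp only [p, q, map_sub, map_mul, map_add, map_neg, map_one, map_pow, Polynomial.aeval_C, Polynomial.aeval_X, ag, aP, aQ, s1, s2, map_ofNat]
  rw [← gam_cubeC]
  ring
theorem sigma_eq {F : Type*} [Field F] [NumberField F] {k b : ℕ} {t : F} (h : (3:F)^k*t^3+1 = 9^b*(3^k*t+1)^3)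
    (σ : F →ₐ[ℚ] ℂ) : (3:ℂ)^k*(σ t)^3+1 = 9^b*(3^k*(σ t)+1)^3 := by
  have := congrArg σ h
  simpa only [map_add, map_mul, map_pow, map_ofNat, map_one] using this

theorem D_bound7 {D n k b : ℕ} (h21 : 21*b ≤ k) (hD : (D:ℝ) ≤ 3*gam^(2*n*k)*9^b) :
    (D:ℝ)^7 ≤ gam^(21+(14*n+2)*k) := by
  have e : 3*gam^(2*n*k)*9^b = gam^(3+2*n*k+6*b) := by
    rw [show (9:ℝ) = (gam^3)^2 by rw [gam_cube]; norm_num]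
    nth_rewrite 1 [← gam_cube]
    rw [← pow_mul, ← pow_mul, ← pow_add, ← pow_add]
    congr 1; ring
  rw [e] at hD
  calc (D:ℝ)^7 ≤ (gam^(3+2*n*k+6*b))^7 := by gcongr
    _ = gam^((3+2*n*k+6*b)*7) := by rw [← pow_mul]
    _ ≤ _ := by
      apply pow_le_pow_right₀ gam_gt.le
      nlinarith

theorem two_sol {F : Type*} [Field F] [NumberField F] {k₁ k₂ b₁ b₂ D₁ D₂ e₁ e₂ : ℕ} {t₁ t₂ : F}
    (H1 : TSol F k₁ b₁ t₁ D₁) (H2 : TSol F k₂ b₂ t₂ D₂) (ξ : (F →ₐ[ℚ] ℂ) → ℂ)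
    (hξ : ∀ σ, ‖ξ σ‖ ≤ 1) (hξ0 : ∀ σ, ξ σ ≠ 0)
    (w1 : ∀ σ : F →ₐ[ℚ] ℂ, σ (9^e₁*(3^k₁*t₁+1)) = ξ σ * gfun (3^k₁*(σ t₁)^3))
    (w2 : ∀ σ : F →ₐ[ℚ] ℂ, σ (9^e₂*(3^k₂*t₂+1)) = ξ σ * gfun (3^k₂*(σ t₂)^3))
    (hk1 : 130 ≤ k₁) (hk2 : 96*k₁ ≤ k₂) : False := by
  obtain ⟨hb1, h211, he1, hD1, hDb1, hI1⟩ := H1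
  obtain ⟨hb2, h212, he2, hD2, hDb2, hI2⟩ := H2
  set n := Module.finrank ℚ F with hn
  have hn1 : 1 ≤ n := Module.finrank_pos
  set m := k₂ / (2*k₁) with hm
  have hm1 : 2*m*k₁ ≤ k₂ := by
    have := Nat.div_mul_le_self k₂ (2*k₁); rw [← hm] at this; linarith
  have hm2 : k₂ < 2*(m+1)*k₁ := by
    have := Nat.lt_div_mul_add (a := k₂) (b := 2*k₁) (by omega); rw [← hm] at this; linarith
  have hm48 : 48 ≤ m := by
    rw [hm, Nat.le_div_iff_mul_le (by omega)]; linarith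
  let Θ : ℕ → F := fun m => 9^e₁*(3^k₁*t₁+1) * Polynomial.aeval (3^k₁*t₁^3) (QQ m) - 9^e₂*(3^k₂*t₂+1) * Polynomial.aeval (3^k₁*t₁^3) (PP m)
  have hz1 := fun σ => z_bound k₁ b₁ hb1 (by omega) _ (sigma_eq he1 σ)
  have hz2 := fun σ => z_bound k₂ b₂ hb2 (by omega) _ (sigma_eq he2 σ)
  have t1ne : t₁ ≠ 0 := by
    rintro rfl
    simp only [ne_eq, OfNat.ofNat_ne_zero, not_false_eq_true, zero_pow, mul_zero, zero_add, one_pow, mul_one] at he1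
    have : (9:ℕ)^b₁ = 1 := by exact_mod_cast he1.symm
    have h9 : 9^1 ≤ 9^b₁ := Nat.pow_le_pow_right (by norm_num) hb1
    omega
  obtain ⟨m', hmm, hm'1, hΘ⟩ : ∃ m', m ≤ m' ∧ m' ≤ m+1 ∧ Θ m' ≠ 0 := by
    by_contra hcon
    push Not at hcon
    have q1 := hcon m le_rfl (by omega)
    have q2 := hcon (m+1) (by omega) le_rfl
    simp only [Θ] at q1 q2
    obtain ⟨κ, hκ, hdet⟩ := pade_det m
    have hd := congrArg (Polynomial.aeval (3^k₁*t₁^3 : F)) hdet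
    simp only [map_sub, map_mul, map_pow, Polynomial.aeval_X] at hd
    have hW : (9^e₁*(3^k₁*t₁+1) : F) ≠ 0 := by
      intro h
      have hne : Nonempty (F →ₐ[ℚ] ℂ) := by
        rw [← Fintype.card_pos_iff, AlgHom.card ℚ F ℂ]; exact hn1
      have σ : F →ₐ[ℚ] ℂ := Classical.arbitrary _
      have := w1 σ
      rw [h, map_zero] at this
      have hg : gfun (3^k₁*(σ t₁)^3) = 0 := (mul_eq_zero.1 this.symm).resolve_left (hξ0 σ)
      have hc := gfun_cube _ (hz1 σ).2
      rw [hg] at hc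
      have hb := (hz1 σ).2
      rw [show (3:ℂ)^k₁*(σ t₁)^3 = -1 by linear_combination -hc] at hb
      norm_num at hb
    have : (9^e₁*(3^k₁*t₁+1) : F) * (Polynomial.aeval (3^k₁*t₁^3 : F) (Polynomial.C κ) * (3^k₁*t₁^3)^(2*m+1)) = 0 := by
      rw [← hd]
      linear_combination Polynomial.aeval (3^k₁*t₁^3 : F) (PP m) * q2 - Polynomial.aeval (3^k₁*t₁^3 : F) (PP (m+1)) * q1
    rw [Polynomial.aeval_C] at this
    have h3 : (algebraMap ℤ F κ) ≠ 0 := by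
      simpa using hκ
    have h4 : ((3:F)^k₁*t₁^3)^(2*m+1) ≠ 0 := pow_ne_zero _ (mul_ne_zero (pow_ne_zero _ three_ne_zero) (pow_ne_zero _ t1ne))
    exact (mul_ne_zero hW (mul_ne_zero h3 h4)) this
  have hint := theta_integral k₁ k₂ e₁ e₂ D₁ D₂ m' t₁ t₂ hI1 hI2
  have hlow := norm_lower (Θ m') hΘ (D₁^(3*m'+1)*D₂) (by positivity) hint
  have hg0 := gam_pos
  -- upper bound for each embedding
  have hup : ∀ σ : F →ₐ[ℚ] ℂ, ‖σ (Θ m')‖ * gam^(12*m*k₁) ≤ gam^(27*(m+1)) := by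
    intro σ
    have s1 : σ (Polynomial.aeval (3^k₁*t₁^3) (QQ m')) = Polynomial.aeval (3^k₁*(σ t₁)^3) (QQ m') := by
      have := Polynomial.aeval_algHom_apply (σ.restrictScalars ℤ) (3^k₁*t₁^3) (QQ m')
      simp at this; rw [map_ofNat] at this; exact this.symm
    have s2 : σ (Polynomial.aeval (3^k₁*t₁^3) (PP m')) = Polynomial.aeval (3^k₁*(σ t₁)^3) (PP m') := by
      have := Polynomial.aeval_algHom_apply (σ.restrictScalars ℤ) (3^k₁*t₁^3) (PP m')
      simp at this; rw [map_ofNat] at this; exact this.symm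
    have hr := pade_rem m' _ (hz1 σ).2
    have hP := PP_bound m' _ (hz1 σ).2
    have hgs := gfun_sub_one _ (hz2 σ).2
    obtain ⟨a1, a2⟩ := hz1 σ
    obtain ⟨c1, c2⟩ := hz2 σ
    have e : σ (Θ m') = ξ σ * ((gfun (3^k₁*(σ t₁)^3) * Polynomial.aeval (3^k₁*(σ t₁)^3) (QQ m') - Polynomial.aeval (3^k₁*(σ t₁)^3) (PP m')) - (gfun (3^k₂*(σ t₂)^3) - 1) * Polynomial.aeval (3^k₁*(σ t₁)^3) (PP m')) := by
      simp only [Θ]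
      rw [map_sub, map_mul, map_mul _ (9^e₂*(3^k₂*t₂+1)), w1, w2, s1, s2]; ring
    set z1 := ‖(3:ℂ)^k₁*(σ t₁)^3‖
    set z2 := ‖(3:ℂ)^k₂*(σ t₂)^3‖
    have hz10 : 0 ≤ z1 := norm_nonneg _
    have hz20 : 0 ≤ z2 := norm_nonneg _
    have b1 : ‖σ (Θ m')‖ ≤ 8*144^m' * z1^(2*m'+1) + 2*z2*(4*72^m') := by
      rw [e, norm_mul]
      calc _ ≤ 1 * (8*144^m' * z1^(2*m'+1) + 2*z2*(4*72^m')) := by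
            apply mul_le_mul (hξ σ) _ (norm_nonneg _) zero_le_one
            refine (norm_sub_le _ _).trans (add_le_add hr ?_)
            rw [norm_mul]
            exact mul_le_mul hgs hP (norm_nonneg _) (by positivity)
        _ = _ := one_mul _
    have b2 : (144:ℝ)^m' ≤ 144^(m+1) := pow_le_pow_right₀ (by norm_num) hm'1
    have b3 : (72:ℝ)^m' ≤ 144^(m+1) := (pow_le_pow_left₀ (by norm_num) (by norm_num) _).trans b2
    have b4 : z1^(2*m'+1) ≤ z1^(2*m) := pow_le_pow_of_le_one hz10 (by linarith) (by omega)
    have b5 : z1^(2*m) * gam^(12*m*k₁) ≤ 8^(2*m) := by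
      have : z1^(2*m) * gam^(12*m*k₁) = (z1*gam^(6*k₁))^(2*m) := by rw [mul_pow, ← pow_mul]; congr 2; ring
      rw [this]; gcongr
    have b6 : z2 * gam^(12*m*k₁) ≤ 8 := by
      refine le_trans ?_ c1
      exact mul_le_mul_of_nonneg_left (pow_le_pow_right₀ gam_gt.le (by nlinarith)) hz20
    have b7 : (8:ℝ) ≤ 8^(2*m) := by
      calc (8:ℝ) = 8^1 := by norm_num
        _ ≤ _ := pow_le_pow_right₀ (by norm_num) (by omega)
    calc ‖σ (Θ m')‖ * gam^(12*m*k₁) ≤ (8*144^m' * z1^(2*m'+1) + 2*z2*(4*72^m')) * gam^(12*m*k₁) := by gcongr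
      _ ≤ (8*144^(m+1) * z1^(2*m) + 2*z2*(4*144^(m+1))) * gam^(12*m*k₁) := by gcongr
      _ = 8*144^(m+1) * (z1^(2*m) * gam^(12*m*k₁)) + 8 * 144^(m+1) * (z2 * gam^(12*m*k₁)) := by ring
      _ ≤ 8*144^(m+1) * 8^(2*m) + 8 * 144^(m+1) * 8^(2*m) := by gcongr; linarith
      _ = 2304 * 9216^m := by rw [pow_mul, pow_succ, show (9216:ℝ) = 144*8^2 by norm_num, mul_pow]; ring
      _ ≤ 19683 * 19683^m := by gcongr <;> norm_num
      _ = gam^(27*(m+1)) := by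
        rw [pow_mul, show gam^27 = (gam^3)^9 by rw [← pow_mul], gam_cube, pow_succ]; norm_num; ring
  have hcard : Fintype.card (F →ₐ[ℚ] ℂ) = n := AlgHom.card ℚ F ℂ
  have hprod : (∏ σ : F →ₐ[ℚ] ℂ, ‖σ (Θ m')‖) * gam^(12*m*k₁*n) ≤ gam^(27*(m+1)*n) := by
    have : ∏ σ : F →ₐ[ℚ] ℂ, (‖σ (Θ m')‖ * gam^(12*m*k₁)) ≤ ∏ σ : F →ₐ[ℚ] ℂ, gam^(27*(m+1)) :=
      Finset.prod_le_prod (fun σ _ => by positivity) (fun σ _ => hup σ)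
    rw [Finset.prod_mul_distrib, Finset.prod_const, Finset.prod_const, Finset.card_univ, hcard, ← pow_mul, ← pow_mul] at this
    exact this
  have D1b := D_bound7 h211 hDb1
  have D2b := D_bound7 h212 hDb2
  have hD1r : (1:ℝ) ≤ D₁ := by exact_mod_cast hD1
  have f1 : gam^(12*m*k₁*n) ≤ (D₁:ℝ)^(3*m+4) * D₂ * gam^(27*(m+1)*n) := by
    push_cast at hlow
    calc gam^(12*m*k₁*n) = 1 * gam^(12*m*k₁*n) := by ring
      _ ≤ ((D₁:ℝ)^(3*m'+1) * D₂ * ∏ σ : F →ₐ[ℚ] ℂ, ‖σ (Θ m')‖) * gam^(12*m*k₁*n) := by gcongr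
      _ = (D₁:ℝ)^(3*m'+1) * D₂ * ((∏ σ : F →ₐ[ℚ] ℂ, ‖σ (Θ m')‖) * gam^(12*m*k₁*n)) := by ring
      _ ≤ (D₁:ℝ)^(3*m+4) * D₂ * gam^(27*(m+1)*n) := by
        have hpp := pow_le_pow_right₀ hD1r (show 3*m'+1 ≤ 3*m+4 by omega)
        refine mul_le_mul (mul_le_mul_of_nonneg_right hpp (by positivity)) hprod (by positivity) (by positivity)
  have f2 : gam^(84*m*k₁*n) ≤ gam^((3*m+4)*(21+(14*n+2)*k₁) + (21+(14*n+2)*k₂) + 189*(m+1)*n) := by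
    calc gam^(84*m*k₁*n) = (gam^(12*m*k₁*n))^7 := by rw [← pow_mul]; congr 1; ring
      _ ≤ ((D₁:ℝ)^(3*m+4) * D₂ * gam^(27*(m+1)*n))^7 := by gcongr
      _ = ((D₁:ℝ)^7)^(3*m+4) * (D₂:ℝ)^7 * gam^(189*(m+1)*n) := by
        rw [mul_pow, mul_pow, ← pow_mul, ← pow_mul, ← pow_mul, mul_comm 7]; congr 2; ring
      _ ≤ (gam^(21+(14*n+2)*k₁))^(3*m+4) * gam^(21+(14*n+2)*k₂) * gam^(189*(m+1)*n) := by gcongr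
      _ = _ := by rw [← pow_mul, ← pow_add, ← pow_add]; congr 2; ring
  rw [pow_le_pow_iff_right₀ gam_gt] at f2
  -- numeric contradiction
  have g1 : (14*n+2)*k₂ ≤ 16*n*(2*(m+1)*k₁) := Nat.mul_le_mul (by omega) hm2.le
  have g2 : (14*n+2)*k₁ ≤ 16*n*k₁ := Nat.mul_le_mul (by omega) le_rfl
  have g3 : (3*m+4)*((14*n+2)*k₁) ≤ (3*m+4)*(16*n*k₁) := Nat.mul_le_mul le_rfl g2
  have g4 : 84*m*k₁*n ≤ (3*m+4)*21 + (3*m+4)*(16*n*k₁) + 21 + 16*n*(2*(m+1)*k₁) + 189*(m+1)*n := by nlinarith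
  have g5 : (3*m+5)*21 ≤ (3*m+5)*21*n := Nat.le_mul_of_pos_right _ hn1
  have g6 : n*(84*m*k₁) ≤ n*((3*m+5)*21 + (3*m+4)*16*k₁ + 32*(m+1)*k₁ + 189*(m+1)) := by nlinarith
  have g7 := Nat.le_of_mul_le_mul_left g6 hn1
  have g8 : 48*k₁ ≤ m*k₁ := Nat.mul_le_mul hm48 le_rfl
  have g9 : m*130 ≤ m*k₁ := Nat.mul_le_mul le_rfl hk1
  nlinarith
theorem T_finite (F : Type*) [Field F] [NumberField F] :
    {p : ℕ × ℕ | ∃ (t : F) (D : ℕ), TSol F p.1 p.2 t D}.Finite := by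
  by_contra hinf
  set S := {p : ℕ × ℕ | ∃ (t : F) (D : ℕ), TSol F p.1 p.2 t D} with hS
  have hch : ∀ p : ℕ × ℕ, ∃ (t : F) (D : ℕ), p ∈ S → TSol F p.1 p.2 t D := by
    intro p
    by_cases hp : p ∈ S
    · obtain ⟨t, D, h⟩ := hp; exact ⟨t, D, fun _ => h⟩
    · exact ⟨0, 0, fun h => absurd h hp⟩
  choose t D hTD using hch
  let ξ : ℕ × ℕ → (F →ₐ[ℚ] ℂ) → ℂ := fun p σ => σ (9^(p.2/3)*(3^p.1*t p+1)) / gfun (3^p.1*(σ (t p))^3)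
  let R : Set ℂ := ⋃ r ∈ Finset.range 3, {x : ℂ | 9^r * x^3 = 1}
  have hR : R.Finite := by
    apply Set.Finite.biUnion (Finset.finite_toSet _)
    intro r _
    apply ((Polynomial.nthRoots 3 ((9:ℂ)^r)⁻¹).toFinset.finite_toSet).subset
    intro x hx
    simp only [Set.mem_setOf_eq] at hx
    simp only [Finset.mem_coe, Multiset.mem_toFinset]
    rw [Polynomial.mem_nthRoots (by norm_num)]
    field_simp
    linear_combination hx
  have hRpi : (Set.pi Set.univ (fun _ : F →ₐ[ℚ] ℂ => R)).Finite := Set.Finite.pi (fun _ => hR)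
  have hk : ∀ p ∈ S, 3 ≤ p.1 := by
    intro p hp
    obtain ⟨h1, h2, -⟩ := hTD p hp; omega
  have hgz : ∀ p ∈ S, ∀ σ : F →ₐ[ℚ] ℂ, gfun (3^p.1*(σ (t p))^3)^3 = 1 + 3^p.1*(σ (t p))^3 ∧ gfun (3^p.1*(σ (t p))^3) ≠ 0 := by
    intro p hp σ
    obtain ⟨h1, h2, h3, -⟩ := hTD p hp
    have hz := z_bound p.1 p.2 h1 (hk p hp) _ (sigma_eq h3 σ)
    have hc := gfun_cube _ hz.2
    refine ⟨hc, ?_⟩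
    intro h0
    rw [h0] at hc
    have hb := hz.2
    rw [show (3:ℂ)^p.1*(σ (t p))^3 = -1 by linear_combination -hc] at hb
    norm_num at hb
  have hξR : ∀ p ∈ S, ∀ σ, 9^(p.2 % 3) * (ξ p σ)^3 = 1 := by
    intro p hp σ
    obtain ⟨hc, hne⟩ := hgz p hp σ
    obtain ⟨h1, h2, h3, -⟩ := hTD p hp
    have h4 := sigma_eq h3 σ
    simp only [ξ]
    rw [div_pow, hc, mul_div_assoc', div_eq_one_iff_eq (by rw [← hc]; exact pow_ne_zero _ hne), add_comm 1, h4]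
    simp only [map_add, map_mul, map_pow, map_ofNat, map_one]
    have e : (9:ℂ)^p.2 = 9^(p.2%3) * (9^(p.2/3))^3 := by
      rw [← pow_mul, ← pow_add]; congr 1; omega
    rw [e]; ring
  have hξmem : ∀ p ∈ S, ξ p ∈ Set.pi Set.univ (fun _ : F →ₐ[ℚ] ℂ => R) := by
    intro p hp σ _
    simp only [R, Set.mem_iUnion]
    exact ⟨p.2 % 3, Finset.mem_range.2 (Nat.mod_lt _ (by norm_num)), hξR p hp σ⟩
  obtain ⟨x, hx⟩ : ∃ x, ¬ {p | p ∈ S ∧ ξ p = x}.Finite := by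
    by_contra hcon
    push Not at hcon
    apply hinf
    apply (hRpi.biUnion (fun x _ => hcon x)).subset
    intro p hp
    simp only [Set.mem_iUnion]
    exact ⟨ξ p, hξmem p hp, hp, rfl⟩
  have hlarge : ∀ K : ℕ, ∃ p, p ∈ S ∧ ξ p = x ∧ K ≤ p.1 := by
    intro K
    by_contra hcon
    push Not at hcon
    apply hx
    apply ((Finset.range K ×ˢ Finset.range K).finite_toSet).subset
    rintro p ⟨hp, hpx⟩
    have h1 := hcon p hp hpx
    obtain ⟨h2, h3, -⟩ := hTD p hp
    simp; omega
  obtain ⟨p1, hp1, hx1, hk1⟩ := hlarge 130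
  obtain ⟨p2, hp2, hx2, hk2⟩ := hlarge (96*p1.1)
  have hnorm : ∀ σ, 9^(p1.2 % 3) * (x σ)^3 = 1 := fun σ => by rw [← hx1]; exact hξR p1 hp1 σ
  refine two_sol (hTD p1 hp1) (hTD p2 hp2) (e₁ := p1.2/3) (e₂ := p2.2/3) x ?_ ?_ ?_ ?_ hk1 hk2
  · intro σ
    have h := congrArg norm (hnorm σ)
    rw [norm_mul, norm_pow, norm_pow, norm_one, show ‖(9:ℂ)‖ = 9 by simp] at h
    by_contra hcon
    push Not at hcon
    have h1 : 1 < ‖x σ‖^3 := one_lt_pow₀ hcon (by norm_num)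
    have h2 : (1:ℝ) ≤ 9^(p1.2%3) := one_le_pow₀ (by norm_num)
    nlinarith
  · intro σ h0
    have := hnorm σ
    rw [h0] at this; simp at this
  · intro σ
    rw [← hx1]; simp only [ξ]
    rw [div_mul_cancel₀ _ (hgz p1 hp1 σ).2]
  · intro σ
    rw [← hx2]; simp only [ξ]
    rw [div_mul_cancel₀ _ (hgz p2 hp2 σ).2]

section Eis
open NumberField IsCyclotomicExtension.Rat

theorem eis_rep {K : Type*} [Field K] [NumberField K] [IsCyclotomicExtension {3} ℚ K]
    {ζ : K} (hζ : IsPrimitiveRoot ζ 3) (w : 𝓞 K) (hw : w = hζ.toInteger)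
    (hw2 : w ^ 2 = -w - 1) (x : 𝓞 K) : ∃ m n : ℤ, x = m + n * w := by
  have hx : x ∈ Algebra.adjoin ℤ {w} := by
    have := hζ.integralPowerBasis.adjoin_gen_eq_top
    rw [hζ.integralPowerBasis_gen] at this
    rw [hw, this]; trivial
  induction hx using Algebra.adjoin_induction with
  | mem y hy => exact ⟨0, 1, by simpa using hy⟩
  | algebraMap r => exact ⟨r, 0, by simp⟩
  | add a b _ _ ha hb =>
    obtain ⟨m, n, rfl⟩ := ha
    obtain ⟨m', n', rfl⟩ := hb
    exact ⟨m + m', n + n', by push_cast; ring⟩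
  | mul a b _ _ ha hb =>
    obtain ⟨m, n, rfl⟩ := ha
    obtain ⟨m', n', rfl⟩ := hb
    refine ⟨m * m' - n * n', m * n' + n * m' - n * n', ?_⟩
    push_cast
    linear_combination (n * n' : 𝓞 K) * hw2

theorem eis_indep {K : Type*} [Field K] [NumberField K] [IsCyclotomicExtension {3} ℚ K]
    (w : 𝓞 K) (hw2 : w ^ 2 = -w - 1) (m n m' n' : ℤ) (h : (m : 𝓞 K) + n * w = m' + n' * w) :
    m = m' ∧ n = n' := by
  have h1 : ((m - m' : ℤ) : 𝓞 K) + (n - n' : ℤ) * w = 0 := by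
    push_cast; linear_combination h
  suffices h : m - m' = 0 ∧ n - n' = 0 from ⟨by linarith [h.1], by linarith [h.2]⟩
  generalize m - m' = a at h1 ⊢
  generalize n - n' = b at h1 ⊢
  have h2 : ((a ^ 2 - a * b + b ^ 2 : ℤ) : 𝓞 K) = 0 := by
    push_cast
    linear_combination (a + b * w ^ 2 : 𝓞 K) * h1 - ((a : 𝓞 K) * b + b ^ 2 * (w - 1)) * hw2
  have h3 : a ^ 2 - a * b + b ^ 2 = 0 := by exact_mod_cast h2
  have ha : a = 0 := by
    have : a ^ 2 ≤ 0 := by nlinarith [sq_nonneg (a - 2 * b)]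
    nlinarith
  subst ha
  refine ⟨rfl, ?_⟩
  nlinarith

theorem eis_cube_aux {K : Type*} [Field K] [NumberField K] [IsCyclotomicExtension {3} ℚ K]
    {ζ : K} (hζ : IsPrimitiveRoot ζ 3) (s r x : ℤ) (hc : IsCoprime s r) (h3 : ¬ (3 : ℤ) ∣ s + r)
    (h : s ^ 2 - s * r + r ^ 2 = x ^ 3) :
    ∃ m n : ℤ, (s = m ^ 3 + n ^ 3 - 3 * m * n ^ 2 ∧ r = 3 * m * n * (m - n)) ∨
      (s = -(3 * m * n * (m - n)) ∧ r = m ^ 3 + n ^ 3 - 3 * m * n ^ 2 - 3 * m * n * (m - n)) ∨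
      (s = 3 * m * n * (m - n) - (m ^ 3 + n ^ 3 - 3 * m * n ^ 2) ∧
        r = -(m ^ 3 + n ^ 3 - 3 * m * n ^ 2)) := by
  have : IsPrincipalIdealRing (𝓞 K) := three_pid K
  obtain ⟨w, hw⟩ : ∃ w : 𝓞 K, w = hζ.toInteger := ⟨_, rfl⟩
  have hw2 : w ^ 2 = -w - 1 := by
    have := Three.eta_sq hζ
    rw [hw]; exact this
  -- coprimality
  have hcop : IsCoprime ((s : 𝓞 K) + r * w) (s + r * w ^ 2) := by
    obtain ⟨u, v, huv⟩ := hc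
    obtain ⟨c, d, hcd⟩ : IsCoprime (3 : ℤ) (s + r) := by
      rw [Prime.coprime_iff_not_dvd Int.prime_three]; exact h3
    have huv' : (u : 𝓞 K) * s + v * r = 1 := by exact_mod_cast huv
    have hcd' : (c : 𝓞 K) * 3 + d * (s + r) = 1 := by exact_mod_cast hcd
    obtain ⟨g, hg⟩ : ∃ g : 𝓞 K, g = c * (w ^ 2 - 1) - d * r := ⟨_, rfl⟩
    have hw3 : w ^ 3 = 1 := by linear_combination (w - 1) * hw2
    have e1 : (w - 1 : 𝓞 K) = (u * w - v * w ^ 2) * (s + r * w) +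
        (-u + v * w ^ 2) * (s + r * w ^ 2) := by
      linear_combination (1 - w) * huv' - (v * r * (w - 1) : 𝓞 K) * hw3
    have e2 : (1 : 𝓞 K) = g * (w - 1) + d * (s + r * w) := by
      rw [hg]
      linear_combination -hcd' - c * hw3 + c * hw2
    refine ⟨g * (u * w - v * w ^ 2) + d, g * (-u + v * w ^ 2), ?_⟩
    linear_combination -e2 - g * e1
  have hmul : ((s : 𝓞 K) + r * w) * (s + r * w ^ 2) = (x : 𝓞 K) ^ 3 := by
    have : (s : 𝓞 K) ^ 2 - s * r + r ^ 2 = x ^ 3 := by exact_mod_cast h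
    rw [← this]
    linear_combination ((s : 𝓞 K) * r + r ^ 2 * (w - 1)) * hw2
  obtain ⟨d, u, hd⟩ := exists_associated_pow_of_mul_eq_pow' hcop hmul
  obtain ⟨m, n, rfl⟩ := eis_rep hζ w hw hw2 d
  have hu := Three.Units.mem hζ u
  have hcu : ((m : 𝓞 K) + n * w) ^ 3 = (m ^ 3 + n ^ 3 - 3 * m * n ^ 2 : ℤ) +
      (3 * m * n * (m - n) : ℤ) * w := by
    push_cast
    linear_combination (3 * m * n ^ 2 + n ^ 3 * (w - 1) : 𝓞 K) * hw2
  have key : ∀ e : 𝓞 K, (e = 1 ∨ e = w ∨ e = -w - 1) → ∀ m n : ℤ,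
      ((m : 𝓞 K) + n * w) ^ 3 = (m ^ 3 + n ^ 3 - 3 * m * n ^ 2 : ℤ) +
      (3 * m * n * (m - n) : ℤ) * w → ((m : 𝓞 K) + n * w) ^ 3 * e = s + r * w → 
      ∃ m n : ℤ, (s = m ^ 3 + n ^ 3 - 3 * m * n ^ 2 ∧ r = 3 * m * n * (m - n)) ∨
      (s = -(3 * m * n * (m - n)) ∧ r = m ^ 3 + n ^ 3 - 3 * m * n ^ 2 - 3 * m * n * (m - n)) ∨
      (s = 3 * m * n * (m - n) - (m ^ 3 + n ^ 3 - 3 * m * n ^ 2) ∧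
        r = -(m ^ 3 + n ^ 3 - 3 * m * n ^ 2)) := by
    intro e he m n hmn hE
    rw [hmn] at hE
    refine ⟨m, n, ?_⟩
    generalize m ^ 3 + n ^ 3 - 3 * m * n ^ 2 = P at hE ⊢
    generalize 3 * m * n * (m - n) = Q at hE ⊢
    rcases he with rfl | rfl | rfl
    · left
      exact eis_indep w hw2 s r P Q (by rw [← hE]; ring)
    · right; left
      exact eis_indep e hw2 s r (-Q) (P - Q) (by rw [← hE]; push_cast; linear_combination (Q : 𝓞 K) * hw2)
    · right; right
      exact eis_indep w hw2 s r (Q - P) (-P) (by rw [← hE]; push_cast; linear_combination -(Q : 𝓞 K) * hw2)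
  have hcu' : (((-m : ℤ) : 𝓞 K) + (-n : ℤ) * w) ^ 3 = ((-m) ^ 3 + (-n) ^ 3 - 3 * (-m) * (-n) ^ 2 : ℤ) +
      (3 * (-m) * (-n) * ((-m) - (-n)) : ℤ) * w := by
    push_cast
    push_cast at hcu
    linear_combination -hcu
  have hw1 : (hζ.toInteger_isPrimitiveRoot.isUnit (by decide)).unit.val = w := by rw [hw]; rfl
  have hw1' : ((hζ.toInteger_isPrimitiveRoot.isUnit (by decide)).unit ^ 2 : (𝓞 K)ˣ).val = - w - 1 := by
    rw [Units.val_pow_eq_pow_val, hw1, hw2]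
  simp only [List.mem_cons, List.not_mem_nil, or_false] at hu
  have fin : ∀ e : 𝓞 K, (e = 1 ∨ e = w ∨ e = -w - 1) → u.val = -e → (((-m : ℤ) : 𝓞 K) + (-n : ℤ) * w) ^ 3 * e = s + r * w := by
    intro e _ he
    rw [← hd, he]; push_cast; ring
  rcases hu with h | h | h | h | h | h
  · exact key 1 (by simp) m n hcu (by rw [← hd, h]; simp)
  · exact key 1 (by simp) (-m) (-n) hcu' (fin _ (by simp) (by rw [h]; simp))
  · exact key w (by simp) m n hcu (by rw [← hd, h, hw1])
  · exact key w (by simp) (-m) (-n) hcu' (fin _ (by simp) (by rw [h, Units.val_neg, hw1]))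
  · exact key (-w - 1) (by simp) m n hcu (by rw [← hd, h, hw1'])
  · exact key (-w - 1) (by simp) (-m) (-n) hcu' (fin _ (by simp) (by rw [h, Units.val_neg, hw1']))

theorem eis_cube (s r x : ℤ) (hc : IsCoprime s r) (h3 : ¬ (3 : ℤ) ∣ s + r)
    (h : s ^ 2 - s * r + r ^ 2 = x ^ 3) :
    ∃ m n : ℤ, (s = m ^ 3 + n ^ 3 - 3 * m * n ^ 2 ∧ r = 3 * m * n * (m - n)) ∨
      (s = -(3 * m * n * (m - n)) ∧ r = m ^ 3 + n ^ 3 - 3 * m * n ^ 2 - 3 * m * n * (m - n)) ∨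
      (s = 3 * m * n * (m - n) - (m ^ 3 + n ^ 3 - 3 * m * n ^ 2) ∧
        r = -(m ^ 3 + n ^ 3 - 3 * m * n ^ 2)) :=
  haveI : IsCyclotomicExtension {3} ℚ (CyclotomicField 3 ℚ) :=
    CyclotomicField.isCyclotomicExtension 3 ℚ
  haveI : NumberField (CyclotomicField 3 ℚ) := IsCyclotomicExtension.numberField {3} ℚ _
  eis_cube_aux (IsCyclotomicExtension.zeta_spec 3 ℚ (CyclotomicField 3 ℚ)) s r x hc h3 h

end Eis

theorem isCoprime_of_prime {a b : ℤ} (h0 : a ≠ 0 ∨ b ≠ 0)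
    (h : ∀ p : ℤ, Prime p → p ∣ a → p ∣ b → False) : IsCoprime a b := by
  apply isCoprime_of_prime_dvd (by tauto)
  intro p hp h1 h2
  exact h p hp h1 h2

theorem cop_add {a b : ℤ} (h : IsCoprime a b) : IsCoprime a (a + b) := by
  obtain ⟨x, y, hxy⟩ := h
  exact ⟨x - y, y, by linear_combination hxy⟩

theorem pp3 {a b : ℤ} {f : ℕ} (h : IsCoprime a b) (hd : (3 : ℤ) ^ f ∣ a * b) :
    (3 : ℤ) ^ f ∣ a ∨ (3 : ℤ) ^ f ∣ b := by
  by_cases h3 : (3 : ℤ) ∣ a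
  · left
    have : ¬ (3 : ℤ) ∣ b := fun hb => Int.prime_three.not_isUnit (h.isUnit_of_dvd' h3 hb)
    exact Int.prime_three.pow_dvd_of_dvd_mul_right _ this hd
  · right
    exact Int.prime_three.pow_dvd_of_dvd_mul_left _ h3 hd

/-- three pairwise coprime integers with sum relation and product `3^f` times a cube. -/
theorem cubes_of_sum {a b c w : ℤ} {f : ℕ} (hc : IsCoprime a b) (hs : a + b = c)
    (hd : (3 : ℤ) ^ f ∣ c) (hp : a * b * c = 3 ^ f * w ^ 3) (hw : w ≠ 0) :
    ∃ x y z : ℤ, a = x ^ 3 ∧ b = y ^ 3 ∧ c = 3 ^ f * z ^ 3 ∧ z ≠ 0 := by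
  obtain ⟨c', rfl⟩ := hd
  have h3 : (3 : ℤ) ^ f ≠ 0 := by positivity
  have hp' : a * b * c' = w ^ 3 := by
    apply mul_left_cancel₀ h3
    rw [← hp]; ring
  have hac : IsCoprime a (3 ^ f * c') := by
    rw [← hs]; exact cop_add hc
  have hbc : IsCoprime b (3 ^ f * c') := by
    rw [← hs, add_comm]; exact cop_add hc.symm
  have hac' := hac.of_mul_right_right
  have hbc' := hbc.of_mul_right_right
  obtain ⟨x, hx⟩ := Int.eq_pow_of_mul_eq_pow_odd_left (hc.mul_right hac') (by decide : Odd 3)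
    (show a * (b * c') = w ^ 3 by rw [← hp']; ring)
  obtain ⟨y, hy⟩ := Int.eq_pow_of_mul_eq_pow_odd_left (hc.symm.mul_right hbc') (by decide : Odd 3)
    (show b * (a * c') = w ^ 3 by rw [← hp']; ring)
  obtain ⟨z, hz⟩ := Int.eq_pow_of_mul_eq_pow_odd_left (hac'.symm.mul_right hbc'.symm)
    (by decide : Odd 3) (show c' * (a * b) = w ^ 3 by rw [← hp']; ring)
  refine ⟨x, y, z, hx, hy, by rw [hz], ?_⟩
  rintro rfl
  apply hw
  have : w ^ 3 = 0 := by rw [← hp', hz]; ring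
  exact pow_eq_zero_iff (by norm_num) |>.1 this

def HH (p q : ℤ) : ℤ := p ^ 2 - p * q + q ^ 2

theorem HH_cubes (m n x y : ℤ) (hx : 3 * x ^ 6 ≤ 4 * HH m n) (hy : 3 * y ^ 6 ≤ 4 * HH m n) :
    HH x y ^ 9 ≤ 3 ^ 9 * (3 * HH m n ^ 3) := by
  have h0 : 0 ≤ HH x y := by unfold HH; nlinarith [sq_nonneg (x - y), sq_nonneg (x + y)]
  have h0' : 0 ≤ HH m n := by unfold HH; nlinarith [sq_nonneg (m - n), sq_nonneg (m + n)]
  have h1 : HH x y ^ 3 ≤ 36 * HH m n := by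
    rcases le_total (x ^ 2) (y ^ 2) with h | h
    · have : HH x y ≤ 3 * y ^ 2 := by unfold HH; nlinarith [sq_nonneg (x + y)]
      calc HH x y ^ 3 ≤ (3 * y ^ 2) ^ 3 := by gcongr
        _ = 9 * (3 * y ^ 6) := by ring
        _ ≤ _ := by linarith
    · have : HH x y ≤ 3 * x ^ 2 := by unfold HH; nlinarith [sq_nonneg (x + y)]
      calc HH x y ^ 3 ≤ (3 * x ^ 2) ^ 3 := by gcongr
        _ = 9 * (3 * x ^ 6) := by ring
        _ ≤ _ := by linarith
  calc HH x y ^ 9 = (HH x y ^ 3) ^ 3 := by ring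
    _ ≤ (36 * HH m n) ^ 3 := by gcongr
    _ ≤ _ := by nlinarith [pow_nonneg h0' 3]

theorem descent_step (p q u : ℤ) (f : ℕ) (hc : IsCoprime p q) (hu : u ≠ 0)
    (h : p ^ 3 + q ^ 3 = 3 ^ (f + 3) * u ^ 3) :
    ∃ x y z : ℤ, IsCoprime x y ∧ z ≠ 0 ∧ x ^ 3 + y ^ 3 = 3 ^ f * z ^ 3 ∧
      HH x y ^ 9 ≤ 3 ^ 9 * HH p q := by
  have h3p := Int.prime_three
  -- `3 ∣ p + q`
  have hpq : (3 : ℤ) ∣ p + q := by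
    apply h3p.dvd_of_dvd_pow (n := 3)
    have : (p + q) ^ 3 = 3 ^ (f + 3) * u ^ 3 + 3 * (p * q * (p + q)) := by rw [← h]; ring
    rw [this]
    apply dvd_add
    · exact Dvd.dvd.mul_right (dvd_pow_self 3 (by omega)) _
    · exact dvd_mul_right _ _
  obtain ⟨r, hr⟩ := hpq
  have hp3 : ¬ (3 : ℤ) ∣ p := by
    intro hp
    have hq : (3 : ℤ) ∣ q := by
      have : q = 3 * r - p := by linarith
      rw [this]; exact dvd_sub (dvd_mul_right _ _) hp
    exact h3p.not_isUnit (hc.isUnit_of_dvd' hp hq)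
  have hq3 : ¬ (3 : ℤ) ∣ q := by
    intro hq
    have hp : (3 : ℤ) ∣ p := by
      have : p = 3 * r - q := by linarith
      rw [this]; exact dvd_sub (dvd_mul_right _ _) hq
    exact hp3 hp
  have hp : p = 3 * r - q := by linarith
  obtain ⟨x0, hx0⟩ : ∃ x0, x0 = 3 * r ^ 2 - p * q := ⟨_, rfl⟩
  have hrx : r * x0 = 3 ^ (f + 1) * u ^ 3 := by
    have : (9 : ℤ) * (r * x0) = 9 * (3 ^ (f + 1) * u ^ 3) := by
      have e : (9 : ℤ) * (3 ^ (f + 1) * u ^ 3) = 3 ^ (f + 3) * u ^ 3 := by ring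
      rw [e, ← h, hx0, hp]; ring
    linarith
  have hx3 : ¬ (3 : ℤ) ∣ x0 := by
    intro hx
    have : (3 : ℤ) ∣ p * q := by
      have : p * q = 3 * r ^ 2 - x0 := by linarith
      rw [this]; exact dvd_sub (dvd_mul_right _ _) hx
    rcases h3p.dvd_or_dvd this with h | h
    · exact hp3 h
    · exact hq3 h
  have hcop3 : IsCoprime ((3 : ℤ) ^ (f + 1)) x0 :=
    IsCoprime.pow_left ((Prime.coprime_iff_not_dvd h3p).2 hx3)
  obtain ⟨r', hr'⟩ : (3 : ℤ) ^ (f + 1) ∣ r :=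
    hcop3.dvd_of_dvd_mul_right (Dvd.intro _ hrx.symm)
  have hrx' : r' * x0 = u ^ 3 := by
    have h3 : (3 : ℤ) ^ (f + 1) ≠ 0 := by positivity
    apply mul_left_cancel₀ h3
    rw [← hrx, hr']; ring
  have hcp : IsCoprime (p + q) (p * q) := by
    have h1 : IsCoprime (p + q) p := (cop_add hc).symm
    have h2 : IsCoprime (p + q) q := by rw [add_comm]; exact (cop_add hc.symm).symm
    exact h1.mul_right h2
  have hcr : IsCoprime r x0 := by
    have h1 : IsCoprime r (p * q) := by
      rw [hr] at hcp; exact hcp.of_mul_left_right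
    obtain ⟨α, β, hab⟩ := h1
    exact ⟨α + 3 * β * r, -β, by rw [hx0]; linear_combination hab⟩
  have hcr' : IsCoprime r' x0 := by
    rw [hr'] at hcr; exact hcr.of_mul_left_right
  obtain ⟨w, hw⟩ := Int.eq_pow_of_mul_eq_pow_odd_left hcr' (by decide : Odd 3) hrx'
  obtain ⟨x, hx⟩ := Int.eq_pow_of_mul_eq_pow_odd_right hcr' (by decide : Odd 3) hrx'
  have hw0 : w ≠ 0 := by
    rintro rfl
    apply hu
    have : u ^ 3 = 0 := by rw [← hrx', hw]; ring
    exact pow_eq_zero_iff (by norm_num) |>.1 this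
  have h3r : (3 : ℤ) ∣ r := by
    rw [hr']; exact Dvd.dvd.mul_right (dvd_pow_self 3 (by omega)) _
  have hrq : IsCoprime (2 * r - q) r := by
    have : IsCoprime q r := by
      rw [hr] at hcp; exact (hcp.of_mul_left_right.of_mul_right_right).symm
    obtain ⟨α, β, hab⟩ := this
    exact ⟨-α, β + 2 * α, by linear_combination hab⟩
  have hsr : ¬ (3 : ℤ) ∣ (2 * r - q) + r := by
    intro hh
    apply hq3
    have : q = 3 * r - ((2 * r - q) + r) := by ring
    rw [this]; exact dvd_sub (dvd_mul_right _ _) hh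
  have hmain : ∃ m n : ℤ, 2 * r - q = m ^ 3 + n ^ 3 - 3 * m * n ^ 2 ∧ r = 3 * m * n * (m - n) := by
    obtain ⟨m, n, hmn⟩ := eis_cube (2 * r - q) r x hrq hsr (by rw [← hx, hx0, hp]; ring)
    rcases hmn with hmn | ⟨h1, h2⟩ | ⟨h1, h2⟩
    · exact ⟨m, n, hmn⟩
    · exfalso
      apply hsr
      have : 2 * r - q + r = r + 3 * (-(m * n * (m - n))) := by rw [h1]; ring
      rw [this]
      exact dvd_add h3r (dvd_mul_right _ _)
    · exfalso
      apply hsr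
      have : 2 * r - q + r = 2 * r + 3 * ((m * n * (m - n))) := by rw [h1, h2]; ring
      rw [this]
      exact dvd_add (Dvd.dvd.mul_left h3r _) (dvd_mul_right _ _)
  obtain ⟨m, n, h1, h2⟩ := hmain
  have hmn : IsCoprime m n := by
    apply isCoprime_of_prime
    · by_contra hh
      push Not at hh
      obtain ⟨rfl, rfl⟩ := hh
      have : r = 0 := by rw [h2]; ring
      rw [this] at hr'
      have : r' = 0 := by
        rcases mul_eq_zero.1 hr'.symm with h | h
        · exact absurd h (by positivity)
        · exact h
      rw [this] at hw
      exact hw0 (pow_eq_zero_iff (by norm_num) |>.1 hw.symm)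
    · rintro ℓ hl ⟨m', rfl⟩ ⟨n', rfl⟩
      apply hl.not_isUnit
      apply hrq.isUnit_of_dvd'
      · rw [h1]
        exact ⟨ℓ ^ 2 * (m' ^ 3 + n' ^ 3 - 3 * m' * n' ^ 2), by ring⟩
      · rw [h2]
        exact ⟨3 * m' * (ℓ * n') * (ℓ * m' - ℓ * n'), by ring⟩
  have hprod : m * n * (m - n) = 3 ^ f * w ^ 3 := by
    have : (3 : ℤ) * (m * n * (m - n)) = 3 * (3 ^ f * w ^ 3) := by
      have : (3 : ℤ) * (3 ^ f * w ^ 3) = r := by rw [hr', hw]; ring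
      rw [this, h2]; ring
    linarith
  have hHH : HH p q = 3 * HH m n ^ 3 := by
    have hq : q = 2 * r - (m ^ 3 + n ^ 3 - 3 * m * n ^ 2) := by linarith
    unfold HH
    rw [hp, hq, h2]; ring
  rw [hHH]
  have hmn1 : IsCoprime m (m - n) := by
    obtain ⟨α, β, hab⟩ := hmn
    exact ⟨α + β, -β, by linear_combination hab⟩
  have hmn2 : IsCoprime n (m - n) := by
    obtain ⟨α, β, hab⟩ := hmn
    exact ⟨α + β, α, by linear_combination hab⟩
  have hB1 : 3 * m ^ 2 ≤ 4 * HH m n := by unfold HH; nlinarith [sq_nonneg (m - 2 * n)]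
  have hB2 : 3 * n ^ 2 ≤ 4 * HH m n := by unfold HH; nlinarith [sq_nonneg (2 * m - n)]
  have hB3 : 3 * (m - n) ^ 2 ≤ 4 * HH m n := by unfold HH; nlinarith [sq_nonneg (m + n)]
  -- which of `m, n, m - n` is divisible by 3
  have split3 : ((3 : ℤ) ^ f ∣ m ∨ (3 : ℤ) ^ f ∣ n) ∨ (3 : ℤ) ^ f ∣ m - n := by
    have hd : (3 : ℤ) ^ f ∣ m * n * (m - n) := Dvd.intro _ hprod.symm
    rcases pp3 (hmn1.mul_left hmn2) hd with hd | hd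
    · exact Or.inl (pp3 hmn hd)
    · exact Or.inr hd
  rcases split3 with (hd | hd) | hd
  · obtain ⟨x, y, z, hx, hy, hz, hz0⟩ := cubes_of_sum hmn2 (show n + (m - n) = m by ring) hd
      (show n * (m - n) * m = 3 ^ f * w ^ 3 by rw [← hprod]; ring) hw0
    refine ⟨x, y, z, ?_, hz0, by rw [← hx, ← hy, ← hz]; ring, HH_cubes _ _ _ _ ?_ ?_⟩
    · rw [hy, hx] at hmn2
      exact (IsCoprime.pow_iff (by norm_num) (by norm_num)).1 hmn2
    · convert hB2 using 2; rw [hx]; ring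
    · convert hB3 using 2; rw [hy]; ring
  · obtain ⟨x, y, z, hx, hy, hz, hz0⟩ := cubes_of_sum (show IsCoprime m (-(m - n)) from hmn1.neg_right)
      (show m + -(m - n) = n by ring) hd
      (show m * (-(m - n)) * n = 3 ^ f * (-w) ^ 3 by linear_combination -hprod) (by simpa using hw0)
    refine ⟨x, y, z, ?_, hz0, by rw [← hx, ← hy, ← hz]; ring, HH_cubes _ _ _ _ ?_ ?_⟩
    · have := hmn1.neg_right
      rw [hy] at this
      rw [hx] at this
      exact (IsCoprime.pow_iff (by norm_num) (by norm_num)).1 this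
    · convert hB1 using 2; rw [hx]; ring
    · convert hB3 using 2
      have : (m - n) ^ 2 = (-(m - n)) ^ 2 := by ring
      rw [this, hy]; ring
  · obtain ⟨x, y, z, hx, hy, hz, hz0⟩ := cubes_of_sum (show IsCoprime m (-n) from hmn.neg_right)
      (show m + -n = m - n by ring) hd
      (show m * (-n) * (m - n) = 3 ^ f * (-w) ^ 3 by linear_combination -hprod) (by simpa using hw0)
    refine ⟨x, y, z, ?_, hz0, by rw [← hx, ← hy, ← hz]; ring, HH_cubes _ _ _ _ ?_ ?_⟩
    · have := hmn.neg_right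
      rw [hy] at this
      rw [hx] at this
      exact (IsCoprime.pow_iff (by norm_num) (by norm_num)).1 this
    · convert hB1 using 2; rw [hx]; ring
    · convert hB2 using 2
      have : n ^ 2 = (-n) ^ 2 := by ring
      rw [this, hy]; ring

set_option exponentiation.threshold 500 in
theorem descent_bound (p q u : ℤ) (b : ℕ) (hb : 3 ≤ b) (hc : IsCoprime p q) (hu : u ≠ 0)
    (h : p ^ 3 + q ^ 3 = 9 ^ b * u ^ 3) : 3 ^ (108 * b) ≤ 3 ^ 450 * HH p q := by
  obtain ⟨f, hf⟩ : ∃ f, 2 * b = f + 6 := ⟨2 * b - 6, by omega⟩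
  have h9 : (9 : ℤ) ^ b = 3 ^ (f + 3 + 3) := by
    rw [show (9 : ℤ) = 3 ^ 2 by norm_num, ← pow_mul, hf]
  rw [h9] at h
  obtain ⟨x, y, z, hc1, hz, h1, hH1⟩ := descent_step p q u (f + 3) hc hu h
  obtain ⟨x', y', z', hc2, hz', h2, hH2⟩ := descent_step x y z f hc1 hz h1
  have n0 : 0 ≤ HH p q := by unfold HH; nlinarith [sq_nonneg (p - q), sq_nonneg (p + q)]
  have n1 : 0 ≤ HH x y := by unfold HH; nlinarith [sq_nonneg (x - y), sq_nonneg (x + y)]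
  have n2 : 0 ≤ HH x' y' := by unfold HH; nlinarith [sq_nonneg (x' - y'), sq_nonneg (x' + y')]
  have e1 : HH x' y' ^ 81 ≤ 3 ^ 90 * HH p q := by
    calc HH x' y' ^ 81 = (HH x' y' ^ 9) ^ 9 := by ring
      _ ≤ (3 ^ 9 * HH x y) ^ 9 := by gcongr
      _ = 3 ^ 81 * HH x y ^ 9 := by ring
      _ ≤ 3 ^ 81 * (3 ^ 9 * HH p q) := by gcongr
      _ = _ := by ring
  have e2 : ((3 : ℤ) ^ f) ^ 2 ≤ 4 * HH x' y' ^ 3 := by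
    have a1 : (x' + y') ^ 2 ≤ 4 * HH x' y' := by unfold HH; nlinarith [sq_nonneg (x' - y')]
    have a2 : (3 ^ f * z' ^ 3) ^ 2 = (x' + y') ^ 2 * HH x' y' ^ 2 := by
      rw [← h2]; unfold HH; ring
    have a3 : 1 ≤ (z' ^ 3) ^ 2 := by
      have : 0 < (z' ^ 3) ^ 2 := by positivity
      linarith
    calc ((3 : ℤ) ^ f) ^ 2 ≤ (3 ^ f) ^ 2 * (z' ^ 3) ^ 2 := le_mul_of_one_le_right (by positivity) a3
      _ = (x' + y') ^ 2 * HH x' y' ^ 2 := by rw [← a2]; ring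
      _ ≤ 4 * HH x' y' * HH x' y' ^ 2 := by gcongr
      _ = _ := by ring
  have e3 : (3 : ℤ) ^ (108 * b) = 3 ^ 324 * (((3 : ℤ) ^ f) ^ 2) ^ 27 := by
    rw [← pow_mul, ← pow_mul, ← pow_add]; congr 1; omega
  rw [e3]
  calc (3 : ℤ) ^ 324 * (((3 : ℤ) ^ f) ^ 2) ^ 27 ≤ 3 ^ 324 * (4 * HH x' y' ^ 3) ^ 27 := by gcongr
    _ = 3 ^ 324 * 4 ^ 27 * HH x' y' ^ 81 := by ring
    _ ≤ 3 ^ 324 * 4 ^ 27 * (3 ^ 90 * HH p q) := by gcongr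
    _ = (3 ^ 324 * 4 ^ 27 * 3 ^ 90) * HH p q := by ring
    _ ≤ _ := by
      gcongr
      calc (3 : ℤ) ^ 324 * 4 ^ 27 * 3 ^ 90 ≤ 3 ^ 324 * 3 ^ 36 * 3 ^ 90 := by
            gcongr; norm_num
        _ = 3 ^ 450 := by rw [← pow_add, ← pow_add]

/-- rational solutions come with `k = 3j`, and integers. -/
theorem rat_red (k b : ℕ) (hk : 1 ≤ k) (hb : 1 ≤ b) (t : ℚ)
    (h : (3 : ℚ) ^ k * t ^ 3 + 1 = 9 ^ b * (3 ^ k * t + 1) ^ 3) :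
    ∃ (j : ℕ) (p q : ℤ), k = 3 * j ∧ IsCoprime p q ∧ 0 < q ∧ (3 : ℚ) ^ j * t = p / q ∧
      p ^ 3 + q ^ 3 = 9 ^ b * (9 ^ j * p + q) ^ 3 := by
  obtain ⟨j, i, hi, hki⟩ : ∃ j i : ℕ, i < 3 ∧ k = 3 * j + i :=
    ⟨k / 3, k % 3, Nat.mod_lt _ (by norm_num), (Nat.div_add_mod k 3).symm⟩
  obtain ⟨s, hs⟩ : ∃ s : ℚ, s = 3 ^ j * t := ⟨_, rfl⟩
  have hE : (3 : ℚ) ^ i * s ^ 3 + 1 = 9 ^ b * (3 ^ i * 9 ^ j * s + 1) ^ 3 := by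
    have e1 : (3 : ℚ) ^ i * s ^ 3 = 3 ^ k * t ^ 3 := by
      rw [hs, hki, pow_add, pow_mul']; ring
    have e2 : (3 : ℚ) ^ i * 9 ^ j * s = 3 ^ k * t := by
      rw [hs, hki, pow_add, show (9 : ℚ) = 3 ^ 2 by norm_num, ← pow_mul]
      rw [show 3 * j = 2 * j + j by ring, pow_add]; ring
    rw [e1, e2, h]
  obtain ⟨p, hp⟩ : ∃ p : ℤ, p = s.num := ⟨_, rfl⟩
  obtain ⟨q, hq⟩ : ∃ q : ℤ, q = s.den := ⟨_, rfl⟩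
  have hq0 : 0 < q := by rw [hq]; exact_mod_cast s.den_pos
  have hspq : s = p / q := by rw [hp, hq]; exact_mod_cast (Rat.num_div_den s).symm
  have hcop : IsCoprime p q := by
    rw [hp, hq]; exact Int.isCoprime_iff_nat_coprime.2 (by simpa using s.reduced)
  have hZ : (3 : ℤ) ^ i * p ^ 3 + q ^ 3 = 9 ^ b * (3 ^ i * 9 ^ j * p + q) ^ 3 := by
    have hq' : (q : ℚ) ≠ 0 := by exact_mod_cast hq0.ne'
    have : (3 : ℚ) ^ i * p ^ 3 + q ^ 3 = 9 ^ b * (3 ^ i * 9 ^ j * p + q) ^ 3 := by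
      rw [hspq] at hE
      field_simp at hE
      linear_combination hE
    exact_mod_cast this
  have h9 : (9 : ℤ) ∣ 9 ^ b := dvd_pow_self 9 (by omega)
  have h3p := Int.prime_three
  have h3q : i ≠ 0 → (3 : ℤ) ∣ q := by
    intro hi0
    apply h3p.dvd_of_dvd_pow (n := 3)
    have : q ^ 3 = 9 ^ b * (3 ^ i * 9 ^ j * p + q) ^ 3 - 3 ^ i * p ^ 3 := by rw [← hZ]; ring
    rw [this]
    apply dvd_sub
    · exact Dvd.dvd.mul_right (dvd_trans (by norm_num) h9) _
    · exact Dvd.dvd.mul_right (dvd_pow_self 3 hi0) _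
  have h3p' : (3 : ℤ) ∣ q → ¬ (3 : ℤ) ∣ p := fun hq hp => h3p.not_isUnit (hcop.isUnit_of_dvd' hp hq)
  have hi0 : i = 0 := by
    by_contra hne
    obtain ⟨q', rfl⟩ := h3q hne
    apply h3p' (dvd_mul_right _ _)
    apply h3p.dvd_of_dvd_pow (n := 3)
    obtain ⟨g, hg⟩ := h9
    have : i = 1 ∨ i = 2 := by omega
    rcases this with rfl | rfl
    · rw [hg] at hZ
      exact ⟨g * (3 ^ 1 * 9 ^ j * p + 3 * q') ^ 3 - 3 * q' ^ 3, by linarith⟩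
    · rw [hg] at hZ
      exact ⟨9 * g * (3 * 9 ^ j * p + q') ^ 3 - q' ^ 3, by linarith⟩
  subst hi0
  refine ⟨j, p, q, by simpa using hki, hcop, hq0, by rw [← hs, hspq], ?_⟩
  simpa using hZ

theorem rat_size (j b : ℕ) (hj : 1 ≤ j) (hb : 1 ≤ b) (p q : ℤ) (hc : IsCoprime p q) (hq : 0 < q)
    (h : p ^ 3 + q ^ 3 = 9 ^ b * (9 ^ j * p + q) ^ 3) :
    9 ^ j * p + q ≠ 0 ∧ |p| ≤ 9 ^ b ∧ q ≤ 3 * 9 ^ j * 9 ^ b := by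
  have h9j : (9 : ℤ) ≤ 9 ^ j := le_self_pow₀ (by norm_num) (by omega)
  have h9b : (9 : ℤ) ≤ 9 ^ b := le_self_pow₀ (by norm_num) (by omega)
  have hu : 9 ^ j * p + q ≠ 0 := by
    intro hu
    rw [hu] at h
    have h1 : p ^ 3 = (-q) ^ 3 := by linarith [h]
    have h2 : p = -q := (Odd.strictMono_pow (by decide : Odd 3)).injective h1
    rw [h2] at hu
    nlinarith
  have hp0 : p ≠ 0 := by
    rintro rfl
    have : q ^ 3 * (9 ^ b - 1) = 0 := by linear_combination -h
    rcases mul_eq_zero.1 this with h | h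
    · exact absurd (pow_eq_zero_iff (by norm_num) |>.1 h) hq.ne'
    · linarith
  have hpd : p ∣ 9 ^ b - 1 := by
    have : IsCoprime p (q ^ 3) := hc.pow_right
    apply this.dvd_of_dvd_mul_left
    refine ⟨p ^ 2 - 9 ^ b * (9 ^ j * ((9 ^ j * p) ^ 2 + 3 * 9 ^ j * p * q + 3 * q ^ 2)), ?_⟩
    linear_combination -h
  have hp1 : |p| ≤ 9 ^ b - 1 := Int.le_of_dvd (by linarith) ((abs_dvd _ _).2 hpd)
  have hq1 : q ≤ 3 * 9 ^ j * |p| := by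
    by_contra hlt
    push Not at hlt
    have hpp : 0 < |p| := abs_pos.2 hp0
    obtain ⟨v, hv⟩ : ∃ v : ℤ, v = 9 ^ j * |p| := ⟨_, rfl⟩
    have hv1 : 3 * v < q := by rw [hv]; linarith
    have hv2 : |p| ≤ v := by rw [hv]; nlinarith
    have hlow : 2 * q ≤ 3 * (9 ^ j * p + q) := by
      have : -v ≤ 9 ^ j * p := by
        rw [hv]; nlinarith [neg_abs_le p]
      linarith
    have hL : p ^ 3 ≤ |p| ^ 3 := by rw [← abs_pow]; exact le_abs_self _
    have hL2 : (3 * |p|) ^ 3 ≤ q ^ 3 := by gcongr; linarith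
    have hR : (2 * q) ^ 3 ≤ (3 * (9 ^ j * p + q)) ^ 3 := by gcongr
    have hR0 : 0 ≤ (9 ^ j * p + q) ^ 3 := by apply pow_nonneg; linarith
    have hR2 : 9 * (9 ^ j * p + q) ^ 3 ≤ 9 ^ b * (9 ^ j * p + q) ^ 3 := by gcongr
    have hq3 : 0 < q ^ 3 := by positivity
    nlinarith
  refine ⟨hu, by linarith, hq1.trans ?_⟩
  gcongr
  linarith

theorem caseII_finite :
    {p : ℕ × ℕ | 1 ≤ p.1 ∧ 1 ≤ p.2 ∧ ∃ t : ℚ,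
      (3 : ℚ) ^ p.1 * t ^ 3 + 1 = 9 ^ p.2 * (3 ^ p.1 * t + 1) ^ 3}.Finite := by
  apply ((T_finite ℚ).union ((Set.finite_Iic 105).prod (Set.finite_Iic 5))).subset
  rintro ⟨k, b⟩ ⟨hk, hb, t, ht⟩
  simp only at hk hb ht
  obtain ⟨j, p, q, hkj, hc, hq, hs, h⟩ := rat_red k b hk hb t ht
  obtain ⟨hu, hp1, hq1⟩ := rat_size j b (by omega) hb p q hc hq h
  by_cases hbk : 21 * b ≤ k
  · left
    refine ⟨t, q.natAbs, hb, hbk, ht, by omega, ?_, ?_⟩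
    · have e1 : ((q.natAbs : ℕ) : ℝ) = (q : ℝ) := by
        rw [Nat.cast_natAbs, abs_of_pos hq]
      have e2 : gam ^ (2 * Module.finrank ℚ ℚ * k) = 9 ^ j := by
        rw [Module.finrank_self, hkj, show 2 * 1 * (3 * j) = 3 * (2 * j) by ring, pow_mul, gam_cube,
          pow_mul]
        norm_num
      rw [e1, e2]
      exact_mod_cast hq1
    · intro I
      have e1 : ((q.natAbs : ℕ) : ℂ) = (q : ℂ) := by
        rw [Nat.cast_natAbs, abs_of_pos hq]
      rw [e1]
      rcases I.eq_empty_or_nonempty with rfl | ⟨σ, hσ⟩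
      · simp only [Finset.prod_empty, mul_one]
        exact isIntegral_algebraMap (R := ℤ) (x := q)
      · have hI : I = {σ} := by
          ext τ
          have hts : τ = σ := by
            apply AlgHom.ext
            intro x
            have e1 := map_ratCast τ x
            have e2 := map_ratCast σ x
            simp only [Rat.cast_id] at e1 e2
            rw [e1, e2]
          rw [hts]
          simp [hσ]
        rw [hI, Finset.prod_singleton]
        have e3 : (q : ℂ) * ((gam : ℂ) ^ k * σ t) = (p : ℂ) := by
          rw [hkj, pow_mul, gam_cubeC]
          have : (q : ℚ) * (3 ^ j * t) = p := by
            rw [hs]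
            have hq' : (q : ℚ) ≠ 0 := by exact_mod_cast hq.ne'
            field_simp
          have := congrArg σ this
          simpa using this
        rw [e3]
        exact isIntegral_algebraMap (R := ℤ) (x := p)
  · right
    simp only [Set.mem_prod, Set.mem_Iic]
    by_cases hb3 : 3 ≤ b
    · have hd := descent_bound p q _ b hb3 hc hu h
      have hH : HH p q ≤ 3 ^ (3 + 4 * j + 4 * b) := by
        have e : (3 : ℤ) ^ (3 + 4 * j + 4 * b) = 3 * (3 * 9 ^ j * 9 ^ b) ^ 2 := by
          have a1 : (3 : ℤ) ^ (4 * j) = (9 ^ j) ^ 2 := by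
            rw [← pow_mul, mul_comm j 2, pow_mul, pow_mul]; norm_num
          have a2 : (3 : ℤ) ^ (4 * b) = (9 ^ b) ^ 2 := by
            rw [← pow_mul, mul_comm b 2, pow_mul, pow_mul]; norm_num
          rw [pow_add, pow_add, a1, a2]; ring
        rw [e]
        have h9j : (1 : ℤ) ≤ 9 ^ j := one_le_pow₀ (by norm_num)
        have h9b : (1 : ℤ) ≤ 9 ^ b := one_le_pow₀ (by norm_num)
        have hp2 : |p| ≤ 3 * 9 ^ j * 9 ^ b := by nlinarith
        have hq2 : |q| ≤ 3 * 9 ^ j * 9 ^ b := by rw [abs_of_pos hq]; exact hq1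
        have a1 := sq_le_sq' (neg_le_of_abs_le hp2) (le_of_abs_le hp2)
        have a2 := sq_le_sq' (neg_le_of_abs_le hq2) (le_of_abs_le hq2)
        unfold HH
        nlinarith [sq_nonneg (p + q)]
      have h3 : (3 : ℤ) ^ (108 * b) ≤ 3 ^ (450 + (3 + 4 * j + 4 * b)) := by
        rw [pow_add]
        exact hd.trans (by gcongr)
      have := (pow_le_pow_iff_right₀ (by norm_num : (1 : ℤ) < 3)).1 h3
      omega
    · omega

theorem lte3 {d : ℤ} (j : ℕ) : ∀ (e : ℕ) (X K : ℤ√d) (n : ℕ), 1 ≤ e → X = 1 + 3 ^ e * K →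
    ¬ ((3 : ℤ√d) ∣ K) → (3 : ℤ√d) ^ (e + j) ∣ X ^ n - 1 → 3 ^ j ∣ n := by
  have h30 : ∀ e : ℕ, (3 : ℤ√d) ^ e ≠ 0 := by
    intro e h
    have : (((3 ^ e : ℤ)) : ℤ√d) = ((0 : ℤ) : ℤ√d) := by push_cast; exact h
    have h2 : (3 ^ e : ℤ) = 0 := by exact_mod_cast this
    exact absurd h2 (by positivity)
  have hcancel : ∀ (e : ℕ) (a b : ℤ√d), (3 : ℤ√d) ^ e * a = 3 ^ e * b → a = b := by
    intro e a b hab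
    have hc : (3 : ℤ√d) ^ e = ((3 ^ e : ℤ) : ℤ√d) := by push_cast; rfl
    rw [hc, Zsqrtd.ext_iff] at hab
    simp only [Zsqrtd.re_mul, Zsqrtd.im_mul, Zsqrtd.re_intCast, Zsqrtd.im_intCast, mul_zero,
      zero_mul, add_zero] at hab
    have h3 : (3 : ℤ) ^ e ≠ 0 := by positivity
    apply Zsqrtd.ext
    · exact mul_left_cancel₀ h3 hab.1
    · have := hab.2
      exact mul_left_cancel₀ h3 this
  induction j with
  | zero => intro e X K n _ _ _ _; simp
  | succ j ih =>
    intro e X K n he hX hK hd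
    -- expansion
    have hexp : ∀ n : ℕ, ∃ R : ℤ√d, X ^ n = 1 + n * 3 ^ e * K + 3 ^ (e + 1) * R := by
      intro n
      obtain ⟨e', rfl⟩ : ∃ e', e = e' + 1 := ⟨e - 1, by omega⟩
      induction n with
      | zero => exact ⟨0, by simp⟩
      | succ n ihn =>
        obtain ⟨R, hR⟩ := ihn
        refine ⟨R + 3 ^ e' * n * K ^ 2 + 3 ^ (e' + 1) * R * K, ?_⟩
        rw [pow_succ, hR, hX]; push_cast; ring
    have h3n : 3 ∣ n := by
      obtain ⟨R, hR⟩ := hexp n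
      obtain ⟨S, hS⟩ := hd
      have h1 : (n : ℤ√d) * K = 3 * (3 ^ j * S - R) := by
        apply hcancel e
        have : X ^ n - 1 = 3 ^ e * (n * K) + 3 ^ (e + 1) * R := by rw [hR]; ring
        rw [hS] at this
        linear_combination -this
      by_contra hn
      apply hK
      obtain ⟨u, v, huv⟩ : IsCoprime (3 : ℤ) (n : ℤ) := by
        rw [Prime.coprime_iff_not_dvd Int.prime_three]; exact_mod_cast hn
      have huv' : (u : ℤ√d) * 3 + v * n = 1 := by exact_mod_cast congrArg (fun z : ℤ => (z : ℤ√d)) huv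
      exact ⟨u * K + v * (3 ^ j * S - R), by linear_combination (-K) * huv' + v * h1⟩
    obtain ⟨n', rfl⟩ := h3n
    rw [pow_succ' 3 j]
    apply mul_dvd_mul_left
    obtain ⟨e', rfl⟩ : ∃ e', e = e' + 1 := ⟨e - 1, by omega⟩
    apply ih (e' + 1 + 1) (X ^ 3) (K + 3 ^ (e' + 1) * K ^ 2 + 3 ^ (2 * e' + 1) * K ^ 3) n' (by omega)
    · rw [hX]; ring
    · intro h
      apply hK
      have : K = (K + 3 ^ (e' + 1) * K ^ 2 + 3 ^ (2 * e' + 1) * K ^ 3) -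
        3 * (3 ^ e' * K ^ 2 + 3 ^ (2 * e') * K ^ 3) := by ring
      rw [this]
      exact dvd_sub h (dvd_mul_right _ _)
    · rw [← pow_mul, show e' + 1 + 1 + j = e' + 1 + (j + 1) by ring]
      exact hd

theorem dvd3_iff {d : ℤ} (b : ℕ) (z : ℤ√d) :
    (3 : ℤ√d) ^ b ∣ z ↔ (3 : ℤ) ^ b ∣ z.re ∧ (3 : ℤ) ^ b ∣ z.im := by
  have hc : (3 : ℤ√d) ^ b = ((3 ^ b : ℤ) : ℤ√d) := by push_cast; rfl
  rw [hc, Zsqrtd.intCast_dvd]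

theorem exists_exact3 {d : ℤ} (z : ℤ√d) (hz : z.im ≠ 0) (h3 : (3 : ℤ√d) ∣ z) :
    ∃ (e : ℕ) (K : ℤ√d), 1 ≤ e ∧ z = 3 ^ e * K ∧ ¬ (3 : ℤ√d) ∣ K := by
  by_contra hcon
  push Not at hcon
  have : ∀ e : ℕ, 1 ≤ e → (3 : ℤ√d) ^ e ∣ z := by
    intro e he
    induction e, he using Nat.le_induction with
    | base => simpa using h3
    | succ e he ih =>
      obtain ⟨K, hK⟩ := ih
      obtain ⟨K', hK'⟩ := hcon e K he hK
      exact ⟨K', by rw [hK, hK', pow_succ]; ring⟩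
  obtain ⟨e, he⟩ : ∃ e : ℕ, |z.im| < 3 ^ e := by
    refine ⟨z.im.natAbs, ?_⟩
    rw [Int.abs_eq_natAbs]
    exact_mod_cast Nat.lt_pow_self (by norm_num)
  have h1 := ((dvd3_iff (e + 1) z).1 (this (e + 1) (by omega))).2
  have h2 := Int.le_of_dvd (abs_pos.2 hz) ((dvd_abs _ _).2 h1)
  have : (3 : ℤ) ^ e ≤ 3 ^ (e + 1) := pow_le_pow_right₀ (by norm_num) (by omega)
  linarith

theorem pow_growth {d : ℤ} (hd : 0 < d) (g : Pell.Solution₁ d) (hg : Pell.IsFundamental g) (n : ℕ) :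
    (2 : ℤ) ^ n ≤ (g ^ n).x ∧ 0 ≤ (g ^ n).y := by
  induction n with
  | zero => simp
  | succ n ih =>
    rw [pow_succ g, Pell.Solution₁.x_mul, Pell.Solution₁.y_mul]
    have h1 : 1 < g.x := hg.1
    have h2 : 0 < g.y := hg.2.1
    have hp : (0 : ℤ) < 2 ^ n := by positivity
    constructor
    · rw [pow_succ]
      have : 0 ≤ d * ((g ^ n).y * g.y) := by
        have := ih.2
        positivity
      nlinarith
    · have := ih.2
      have h3 : 0 < (g ^ n).x := by linarith
      positivity

theorem pell_gap (δ : ℤ) :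
    {p : ℕ × ℕ | 1 ≤ p.2 ∧ p.1 < 21 * p.2 ∧ ∃ y : ℤ,
      ((3 : ℤ) ^ (p.1 + p.2) + 3 ^ p.2) ^ 2 - δ * y ^ 2 = 1}.Finite := by
  rcases Set.eq_empty_or_nonempty {p : ℕ × ℕ | 1 ≤ p.2 ∧ p.1 < 21 * p.2 ∧ ∃ y : ℤ,
      ((3 : ℤ) ^ (p.1 + p.2) + 3 ^ p.2) ^ 2 - δ * y ^ 2 = 1} with h0 | ⟨⟨k0, b0⟩, hb0, hk0, y0, h0⟩
  · rw [h0]; exact Set.finite_empty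
  simp only at hb0 hk0 h0
  have hx1 : ∀ k b : ℕ, 1 ≤ b → (1 : ℤ) < 3 ^ (k + b) + 3 ^ b := by
    intro k b hb
    have h1 : (1 : ℤ) ≤ 3 ^ (k + b) := one_le_pow₀ (by norm_num)
    have h2 : (1 : ℤ) ≤ 3 ^ b := one_le_pow₀ (by norm_num)
    linarith
  have hdpos : 0 < δ := Pell.Solution₁.d_pos_of_one_lt_x (a := Pell.Solution₁.mk _ y0 h0)
    (by rw [Pell.Solution₁.x_mk]; exact hx1 _ _ hb0)
  have hdns : ¬ IsSquare δ := Pell.Solution₁.d_nonsquare_of_one_lt_x (a := Pell.Solution₁.mk _ y0 h0)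
    (by rw [Pell.Solution₁.x_mk]; exact hx1 _ _ hb0)
  obtain ⟨g, hg⟩ := Pell.IsFundamental.exists_of_not_isSquare hdpos hdns
  -- every solution is a power
  have hpow : ∀ k b : ℕ, 1 ≤ b → (∃ y : ℤ, ((3 : ℤ) ^ (k + b) + 3 ^ b) ^ 2 - δ * y ^ 2 = 1) →
      ∃ n : ℕ, 1 ≤ n ∧ (2 : ℤ) ^ n ≤ 3 ^ (k + b) + 3 ^ b ∧
        (3 : ℤ√δ) ^ b ∣ ((g : ℤ√δ) ^ 4) ^ n - 1 := by
    rintro k b hb ⟨y, hy⟩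
    rw [← sq_abs y] at hy
    obtain ⟨n, hn⟩ := hg.eq_pow_of_nonneg (a := Pell.Solution₁.mk _ |y| hy)
      (by rw [Pell.Solution₁.x_mk]; linarith [hx1 k b hb]) (by rw [Pell.Solution₁.y_mk]; positivity)
    have hgr := pow_growth hdpos g hg n
    rw [← hn, Pell.Solution₁.x_mk] at hgr
    refine ⟨n, ?_, hgr.1, ?_⟩
    · by_contra h
      have : n = 0 := by omega
      subst this
      have := congrArg Pell.Solution₁.x hn
      rw [Pell.Solution₁.x_mk, pow_zero, Pell.Solution₁.x_one] at this
      linarith [hx1 k b hb]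
    · have e1 : (g : ℤ√δ) ^ n = ⟨(3 : ℤ) ^ (k + b) + 3 ^ b, |y|⟩ := by
        rw [← Pell.Solution₁.coe_mk _ _ hy, hn]; rfl
      have e2 : ((g : ℤ√δ) ^ 4) ^ n = ((g : ℤ√δ) ^ n) ^ 4 := by rw [← pow_mul, ← pow_mul, mul_comm]
      rw [e2, e1]
      have hdx : (3 : ℤ) ^ b ∣ 3 ^ (k + b) + 3 ^ b := dvd_add (pow_dvd_pow 3 (by omega)) dvd_rfl
      generalize (3 : ℤ) ^ (k + b) + 3 ^ b = x at hy hdx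
      generalize |y| = z at hy
      obtain ⟨x', hx'⟩ := hdx
      have e3 : (⟨x, z⟩ : ℤ√δ) ^ 4 - 1 = ⟨8 * x ^ 4 - 8 * x ^ 2, 8 * x ^ 3 * z - 4 * x * z⟩ := by
        have e4 : (⟨x, z⟩ : ℤ√δ) ^ 2 = ⟨2 * x ^ 2 - 1, 2 * x * z⟩ := by
          rw [pow_two]
          apply Zsqrtd.ext
          · simp only [Zsqrtd.re_mul]; linear_combination -hy
          · simp only [Zsqrtd.im_mul]; ring
        rw [show (⟨x, z⟩ : ℤ√δ) ^ 4 = ((⟨x, z⟩ : ℤ√δ) ^ 2) ^ 2 by rw [← pow_mul], e4, pow_two]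
        apply Zsqrtd.ext
        · simp only [Zsqrtd.re_mul, Zsqrtd.re_sub, Zsqrtd.re_one]
          linear_combination (-4 * x ^ 2) * hy
        · simp only [Zsqrtd.im_mul, Zsqrtd.im_sub, Zsqrtd.im_one]
          ring
      rw [e3, dvd3_iff]
      constructor
      · exact ⟨x' * (8 * x ^ 3 - 8 * x), by simp only; linear_combination (8 * x ^ 3 - 8 * x) * hx'⟩
      · exact ⟨x' * (8 * x ^ 2 * z - 4 * z), by
          simp only; linear_combination (8 * x ^ 2 * z - 4 * z) * hx'⟩
  obtain ⟨n0, hn0, -, hd0⟩ := hpow k0 b0 hb0 ⟨y0, h0⟩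
  obtain ⟨h, hh⟩ : ∃ h : ℤ√δ, h = ((g : ℤ√δ) ^ 4) ^ n0 := ⟨_, rfl⟩
  have him : (h - 1).im ≠ 0 := by
    have e : h = ((g ^ (4 * n0) : Pell.Solution₁ δ) : ℤ√δ) := by
      rw [hh, ← pow_mul]; rfl
    have : (h - 1).im = (g ^ (4 * n0)).y := by
      rw [Zsqrtd.im_sub, Zsqrtd.im_one, sub_zero, e]; rfl
    rw [this]
    obtain ⟨N, hN⟩ : ∃ N, 4 * n0 = N.succ := ⟨4 * n0 - 1, by omega⟩
    rw [hN]
    exact (Pell.Solution₁.y_pow_succ_pos hg.x_pos hg.2.1 N).ne'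
  have h3 : (3 : ℤ√δ) ∣ h - 1 := by
    rw [hh]; exact dvd_trans (dvd_pow_self 3 (by omega)) hd0
  obtain ⟨e, K, he, hK, hK3⟩ := exists_exact3 (h - 1) him h3
  have key : ∀ b ∈ {b : ℕ | ∃ k : ℕ, 1 ≤ b ∧ k < 21 * b ∧
      ∃ y : ℤ, ((3 : ℤ) ^ (k + b) + 3 ^ b) ^ 2 - δ * y ^ 2 = 1}, b ≤ 2 * e + 6 := by
    rintro b ⟨k, hb, hk, hy⟩
    obtain ⟨n, hn, hgrow, hdv⟩ := hpow k b hb hy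
    by_contra hlt
    obtain ⟨m, hm⟩ : ∃ m, b = e + m := ⟨b - e, by omega⟩
    have h1 : (3 : ℤ√δ) ^ (e + m) ∣ h ^ n - 1 := by
      rw [← hm, hh, ← pow_mul, mul_comm n0 n, pow_mul]
      refine dvd_trans hdv ?_
      simpa using sub_dvd_pow_sub_pow (((g : ℤ√δ) ^ 4) ^ n) 1 n0
    have h2 := lte3 m e h K n he (by rw [← hK]; ring) hK3 h1
    have h3 := Nat.le_of_dvd (by omega) h2
    have h4 : (2 : ℤ) ^ n ≤ 2 ^ (44 * b) := by
      refine hgrow.trans ?_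
      obtain ⟨c, hc⟩ : ∃ c, 22 * b = c + 1 := ⟨22 * b - 1, by omega⟩
      have a1 : (3 : ℤ) ^ (k + b) ≤ 3 ^ c := pow_le_pow_right₀ (by norm_num) (by omega)
      have a2 : (3 : ℤ) ^ b ≤ 3 ^ c := pow_le_pow_right₀ (by norm_num) (by omega)
      have a3 : (3 : ℤ) ^ (22 * b) = 3 * 3 ^ c := by rw [hc, pow_succ]; ring
      have a4 : (3 : ℤ) ^ (22 * b) ≤ 4 ^ (22 * b) := by gcongr; norm_num
      have a5 : (2 : ℤ) ^ (44 * b) = 4 ^ (22 * b) := by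
        rw [show 44 * b = 2 * (22 * b) by ring, pow_mul]; norm_num
      have : (0 : ℤ) < 3 ^ c := by positivity
      linarith
    have h5 := (pow_le_pow_iff_right₀ (by norm_num : (1 : ℤ) < 2)).1 h4
    have h6 : ∀ m : ℕ, 6 ≤ m → 88 * m < 3 ^ m := by
      intro m hm
      induction m, hm using Nat.le_induction with
      | base => norm_num
      | succ m hm ih => rw [pow_succ]; omega
    have := h6 m (by omega)
    omega
  apply ((Set.finite_Iic (21 * (2 * e + 6))).prod (Set.finite_Iic (2 * e + 6))).subset
  rintro ⟨k, b⟩ ⟨hb, hk, hy⟩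
  simp only at hb hk hy
  have := key b ⟨k, hb, hk, hy⟩
  simp only [Set.mem_prod, Set.mem_Iic]
  omega

/-- the cubic satisfied by the ratio -/
noncomputable def cub (k b : ℕ) : Cubic ℚ :=
  ⟨3 ^ k * (9 ^ k * 9 ^ b - 1), 3 * 9 ^ k * 9 ^ b, 3 * 3 ^ k * 9 ^ b, 9 ^ b - 1⟩

theorem nine_eq {R : Type*} [CommRing R] (k : ℕ) : (9 : R) ^ k = (3 ^ k) ^ 2 := by
  rw [← pow_mul, mul_comm, pow_mul]; norm_num

theorem cub_aeval {L : Type*} [Field L] [Algebra ℚ L] (k b : ℕ) (t : L) :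
    Polynomial.aeval t (cub k b).toPoly = 9 ^ b * (3 ^ k * t + 1) ^ 3 - (3 ^ k * t ^ 3 + 1) := by
  simp only [Cubic.toPoly, cub, map_add, map_mul, map_pow, Polynomial.aeval_C, Polynomial.aeval_X,
    map_sub, map_one, map_ofNat]
  rw [nine_eq k]
  ring

theorem cub_aeval_zero {L : Type*} [Field L] [Algebra ℚ L] (k b : ℕ) (t : L)
    (h : (3 : L) ^ k * t ^ 3 + 1 = 9 ^ b * (3 ^ k * t + 1) ^ 3) :
    Polynomial.aeval t (cub k b).toPoly = 0 := by
  rw [cub_aeval, h, sub_self]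

theorem cub_a_ne (k b : ℕ) (hb : 1 ≤ b) : (cub k b).a ≠ 0 := by
  have h1 : (9 : ℚ) ≤ 9 ^ b := le_self_pow₀ (by norm_num) (by omega)
  have h2 : (1 : ℚ) ≤ 9 ^ k := one_le_pow₀ (by norm_num)
  have : (0 : ℚ) < 9 ^ k * 9 ^ b - 1 := by nlinarith
  simp only [cub]
  positivity

theorem cub_discr (k b : ℕ) : (cub k b).discr =
    -3 * (3 * 3 ^ k) ^ 2 * (((3 ^ (k + b) + 3 ^ b) ^ 2 - 1) * ((3 ^ (k + b) - 3 ^ b) ^ 2 - 1)) := by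
  simp only [Cubic.discr, cub]
  rw [nine_eq k, nine_eq b, pow_add]
  ring

theorem cub_irr (k b : ℕ) (hb : 1 ≤ b)
    (hno : ¬ ∃ t : ℚ, (3 : ℚ) ^ k * t ^ 3 + 1 = 9 ^ b * (3 ^ k * t + 1) ^ 3) :
    Irreducible (cub k b).toPoly := by
  apply Polynomial.irreducible_of_degree_le_three_of_not_isRoot
  · rw [Cubic.natDegree_of_a_ne_zero (cub_a_ne k b hb)]; decide
  · intro t ht
    apply hno
    refine ⟨t, ?_⟩
    have h1 := cub_aeval k b t
    rw [Polynomial.coe_aeval_eq_eval, ht] at h1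
    linarith

theorem cub_splits {L : Type*} [Field L] [Algebra ℚ L] [Normal ℚ L] (k b : ℕ) (hb : 1 ≤ b)
    (hno : ¬ ∃ t : ℚ, (3 : ℚ) ^ k * t ^ 3 + 1 = 9 ^ b * (3 ^ k * t + 1) ^ 3) (t : L)
    (h : (3 : L) ^ k * t ^ 3 + 1 = 9 ^ b * (3 ^ k * t + 1) ^ 3) :
    ((cub k b).toPoly.map (algebraMap ℚ L)).Splits := by
  have hi := cub_irr k b hb hno
  have h0 := cub_aeval_zero k b t h
  have hm := minpoly.eq_of_irreducible hi h0
  have hs := Normal.splits (inferInstance : Normal ℚ L) t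
  apply hs.of_dvd
  · exact Polynomial.map_ne_zero (minpoly.ne_zero (Normal.isIntegral inferInstance t))
  · apply Polynomial.map_dvd
    rw [← hm]
    exact dvd_mul_right _ _

theorem disc_sq {L : Type*} [Field L] [Algebra ℚ L] [Normal ℚ L] (k b : ℕ) (hb : 1 ≤ b)
    (hno : ¬ ∃ t : ℚ, (3 : ℚ) ^ k * t ^ 3 + 1 = 9 ^ b * (3 ^ k * t + 1) ^ 3) (t : L)
    (h : (3 : L) ^ k * t ^ 3 + 1 = 9 ^ b * (3 ^ k * t + 1) ^ 3) :
    ∃ x : L, x ^ 2 = -3 * (((3 ^ (k + b) + 3 ^ b) ^ 2 - 1) * ((3 ^ (k + b) - 3 ^ b) ^ 2 - 1)) := by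
  have : CharZero L := algebraRat.charZero L
  have ha := cub_a_ne k b hb
  obtain ⟨x, y, z, hr⟩ := (Cubic.splits_iff_roots_eq_three ha).1 (cub_splits k b hb hno t h)
  have hd := Cubic.discr_eq_prod_three_roots ha hr
  rw [cub_discr] at hd
  generalize algebraMap ℚ L (cub k b).a * algebraMap ℚ L (cub k b).a * (x - y) * (x - z) * (y - z) = w at hd
  simp only [map_mul, map_pow, map_sub, map_add, map_neg, map_one, map_ofNat] at hd
  have h3 : (3 * 3 ^ k : L) ≠ 0 := mul_ne_zero three_ne_zero (pow_ne_zero _ three_ne_zero)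
  refine ⟨w / (3 * 3 ^ k), ?_⟩
  rw [div_pow, ← hd]
  field_simp

/-! squarefree parts -/

theorem sqf_eq {m n : ℕ} (hm : Squarefree m) (hn : Squarefree n) (h : IsSquare (m * n)) : m = n := by
  have key : ∀ m n : ℕ, Squarefree m → IsSquare (m * n) → m ∣ n := by
    intro m n hm h
    obtain ⟨z, hz⟩ := h
    have h1 : m ∣ z := by
      rw [← hm.dvd_pow_iff_dvd (two_ne_zero), pow_two, ← hz]; exact dvd_mul_right _ _
    obtain ⟨w, rfl⟩ := h1
    refine ⟨w * w, ?_⟩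
    apply Nat.eq_of_mul_eq_mul_left (Nat.pos_of_ne_zero hm.ne_zero)
    rw [hz]; ring
  exact Nat.dvd_antisymm (key m n hm h) (key n m hn (by rwa [mul_comm]))

theorem quad_mem {L : Type*} [Field L] [Algebra ℚ L] (x y : L) (d : ℚ)
    (hx : x ^ 2 = algebraMap ℚ L d) (hy : y ∈ IntermediateField.adjoin ℚ {x}) :
    ∃ u v : ℚ, y = algebraMap ℚ L u + algebraMap ℚ L v * x := by
  have hint : IsIntegral ℚ x := by
    refine ⟨Polynomial.X ^ 2 - Polynomial.C d, Polynomial.monic_X_pow_sub_C d two_ne_zero, ?_⟩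
    simp [hx]
  have hy' : y ∈ Algebra.adjoin ℚ {x} := by
    rw [← IntermediateField.adjoin_simple_toSubalgebra_of_isAlgebraic hint.isAlgebraic]
    exact hy
  clear hy
  induction hy' using Algebra.adjoin_induction with
  | mem y hy => exact ⟨0, 1, by simpa using hy⟩
  | algebraMap r => exact ⟨r, 0, by simp⟩
  | add a b ha' hb' ha hb =>
    obtain ⟨m, n, rfl⟩ := ha
    obtain ⟨m', n', rfl⟩ := hb
    exact ⟨m + m', n + n', by simp only [map_add]; ring⟩
  | mul a b ha' hb' ha hb =>
    obtain ⟨m, n, rfl⟩ := ha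
    obtain ⟨m', n', rfl⟩ := hb
    refine ⟨m * m' + n * n' * d, m * n' + n * m', ?_⟩
    simp only [map_add, map_mul]
    linear_combination (algebraMap ℚ L n * algebraMap ℚ L n') * hx

theorem quad_same {L : Type*} [Field L] [Algebra ℚ L] (x y : L) (d d' : ℚ)
    (hx : x ^ 2 = algebraMap ℚ L d) (hy : y ^ 2 = algebraMap ℚ L d')
    (hxy : IntermediateField.adjoin ℚ {x} = IntermediateField.adjoin ℚ {y}) : IsSquare (d * d') := by
  have inj : Function.Injective (algebraMap ℚ L) := (algebraMap ℚ L).injective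
  have hyx : y ∈ IntermediateField.adjoin ℚ {x} := by
    rw [hxy]; exact IntermediateField.mem_adjoin_simple_self ℚ y
  have hxy' : x ∈ IntermediateField.adjoin ℚ {y} := by
    rw [← hxy]; exact IntermediateField.mem_adjoin_simple_self ℚ x
  obtain ⟨u, v, huv⟩ := quad_mem x y d hx hyx
  obtain ⟨u', v', huv'⟩ := quad_mem y x d' hy hxy'
  have both : (∃ r : ℚ, x = algebraMap ℚ L r) → (∃ r : ℚ, y = algebraMap ℚ L r) → IsSquare (d * d') := by
    rintro ⟨r, rfl⟩ ⟨r', rfl⟩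
    refine ⟨r * r', ?_⟩
    apply inj
    simp only [map_mul]
    rw [← hx, ← hy]; ring
  have e1 : algebraMap ℚ L (d' - u ^ 2 - v ^ 2 * d) = algebraMap ℚ L (2 * u * v) * x := by
    simp only [map_sub, map_mul, map_pow, map_ofNat]
    rw [← hx, ← hy, huv]; ring
  by_cases h : 2 * u * v = 0
  · have huv0 : u = 0 ∨ v = 0 := by
      rcases mul_eq_zero.1 h with h | h
      · left; linarith
      · right; exact h
    rcases huv0 with rfl | rfl
    · refine ⟨v * d, ?_⟩
      have : d' = v ^ 2 * d := by
        apply inj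
        simp only [map_mul, map_pow]
        rw [← hx, ← hy, huv, map_zero]; ring
      rw [this]; ring
    · have hyr : y = algebraMap ℚ L u := by rw [huv]; simp
      apply both _ ⟨_, hyr⟩
      refine ⟨u' + v' * u, ?_⟩
      rw [map_add, map_mul, ← hyr]; exact huv'
  · have hxr : x = algebraMap ℚ L ((d' - u ^ 2 - v ^ 2 * d) / (2 * u * v)) := by
      rw [map_div₀, e1]
      have : algebraMap ℚ L (2 * u * v) ≠ 0 := by rwa [map_ne_zero]
      field_simp
    apply both ⟨_, hxr⟩
    refine ⟨u + v * ((d' - u ^ 2 - v ^ 2 * d) / (2 * u * v)), ?_⟩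
    rw [map_add, map_mul, ← hxr]; exact huv

theorem sqf_finite (L : Type*) [Field L] [Algebra ℚ L] [FiniteDimensional ℚ L] :
    {n : ℕ | Squarefree n ∧ ∃ x : L, x ^ 2 = -3 * (n : L)}.Finite := by
  have hfin : Finite (IntermediateField ℚ L) :=
    Field.finite_intermediateField_of_exists_primitive_element ℚ L
      (Field.exists_primitive_element ℚ L)
  classical
  let f : ℕ → IntermediateField ℚ L := fun n =>
    if h : ∃ x : L, x ^ 2 = -3 * (n : L) then IntermediateField.adjoin ℚ {h.choose} else ⊥
  apply Set.Finite.of_finite_image (f := f) (Set.toFinite _)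
  rintro m ⟨hm, hm2⟩ n ⟨hn, hn2⟩ hf
  simp only [f] at hf
  rw [dif_pos hm2, dif_pos hn2] at hf
  have hs := quad_same hm2.choose hn2.choose (-3 * m) (-3 * n)
    (by rw [hm2.choose_spec]; simp only [map_mul, map_neg, map_ofNat, map_natCast]) (by rw [hn2.choose_spec]; simp only [map_mul, map_neg, map_ofNat, map_natCast]) hf
  apply sqf_eq hm hn
  have h2 : IsSquare ((m * n : ℕ) : ℚ) := by
    obtain ⟨r, hr⟩ := hs
    refine ⟨r / 3, ?_⟩
    push_cast
    linear_combination hr / 9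
  exact Rat.isSquare_natCast_iff.1 h2

/-- in the irreducible case the exponents are spread out, up to finitely many exceptions -/
theorem caseI_gap (L : Type*) [Field L] [Algebra ℚ L] [FiniteDimensional ℚ L] [Normal ℚ L] :
    {p : ℕ × ℕ | 1 ≤ p.1 ∧ 1 ≤ p.2 ∧ p.1 < 21 * p.2 ∧
      (¬ ∃ t : ℚ, (3 : ℚ) ^ p.1 * t ^ 3 + 1 = 9 ^ p.2 * (3 ^ p.1 * t + 1) ^ 3) ∧
      ∃ t : L, (3 : L) ^ p.1 * t ^ 3 + 1 = 9 ^ p.2 * (3 ^ p.1 * t + 1) ^ 3}.Finite := by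
  have : CharZero L := algebraRat.charZero L
  have hS := sqf_finite L
  have hU : (⋃ n ∈ {n : ℕ | Squarefree n ∧ ∃ x : L, x ^ 2 = -3 * (n : L)},
      ⋃ m ∈ (n.divisors : Set ℕ), {p : ℕ × ℕ | 1 ≤ p.2 ∧ p.1 < 21 * p.2 ∧
        ∃ y : ℤ, ((3 : ℤ) ^ (p.1 + p.2) + 3 ^ p.2) ^ 2 - (m : ℤ) * y ^ 2 = 1}).Finite := by
    apply hS.biUnion
    intro n _
    apply (Finset.finite_toSet _).biUnion
    intro m _
    exact pell_gap m
  apply hU.subset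
  rintro ⟨k, b⟩ ⟨hk, hb, hkb, hno, t, ht⟩
  simp only at hk hb hkb hno ht
  obtain ⟨x, hx⟩ := disc_sq k b hb hno t ht
  have hB : 3 ≤ 3 ^ b := by
    calc 3 = 3 ^ 1 := rfl
      _ ≤ 3 ^ b := Nat.pow_le_pow_right (by norm_num) hb
  have hA : 3 * 3 ^ b ≤ 3 ^ (k + b) := by
    rw [← pow_succ']; exact Nat.pow_le_pow_right (by norm_num) (by omega)
  obtain ⟨A, hAd⟩ : ∃ A, A = 3 ^ (k + b) := ⟨_, rfl⟩
  obtain ⟨B, hBd⟩ : ∃ B, B = 3 ^ b := ⟨_, rfl⟩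
  have hoA : Odd A := by rw [hAd]; exact Odd.pow (by decide)
  have hoB : Odd B := by rw [hBd]; exact Odd.pow (by decide)
  have h3A : 3 ∣ A := by rw [hAd]; exact dvd_pow_self _ (by omega)
  have h3B : 3 ∣ B := by rw [hBd]; exact dvd_pow_self _ (by omega)
  have hAL : (3 : L) ^ (k + b) = (A : L) := by rw [hAd]; push_cast; rfl
  have hBL : (3 : L) ^ b = (B : L) := by rw [hBd]; push_cast; rfl
  have hAZ : (3 : ℤ) ^ (k + b) = (A : ℤ) := by rw [hAd]; push_cast; rfl
  have hBZ : (3 : ℤ) ^ b = (B : ℤ) := by rw [hBd]; push_cast; rfl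
  have hprod : ∀ p : ℕ, p.Prime → p ∣ 4 * (A * B) → p = 2 ∨ p = 3 := by
    intro p hp h
    rcases hp.dvd_mul.1 h with h | h
    · left
      have : p ∣ 2 ^ 2 := h
      exact (Nat.prime_dvd_prime_iff_eq hp Nat.prime_two).1 (hp.dvd_of_dvd_pow this)
    · right
      rcases hp.dvd_mul.1 h with h | h
      · rw [hAd] at h
        exact (Nat.prime_dvd_prime_iff_eq hp Nat.prime_three).1 (hp.dvd_of_dvd_pow h)
      · rw [hBd] at h
        exact (Nat.prime_dvd_prime_iff_eq hp Nat.prime_three).1 (hp.dvd_of_dvd_pow h)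
  rw [← hBd] at hB hA
  rw [← hAd] at hA
  rw [hAL, hBL] at hx
  obtain ⟨M1, hM1⟩ : ∃ M1, M1 + 1 = (A + B) ^ 2 := ⟨(A + B) ^ 2 - 1, by
    have : 0 < (A + B) ^ 2 := by positivity
    omega⟩
  obtain ⟨C, rfl⟩ : ∃ C, A = C + B := ⟨A - B, by omega⟩
  have hC : 6 ≤ C := by omega
  obtain ⟨M2, hM2⟩ : ∃ M2, M2 + 1 = C ^ 2 := ⟨C ^ 2 - 1, by
    have : 0 < C ^ 2 := by positivity
    omega⟩
  have hM10 : 0 < M1 := by nlinarith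
  have hM20 : 0 < M2 := by nlinarith
  have hdiff : M1 = M2 + 4 * ((C + B) * B) := by nlinarith
  have hCe : Even C := by
    rcases Nat.even_or_odd C with h | h
    · exact h
    · exact absurd (h.add_odd hoB) (by simpa using hoA)
  have hcop : Nat.Coprime M1 M2 := by
    apply Nat.Coprime.symm
    apply Nat.coprime_of_dvd
    intro p hp h2 h1
    have h4 : p ∣ 4 * ((C + B) * B) := by
      rw [hdiff] at h1
      exact (Nat.dvd_add_right h2).1 h1
    rcases hprod p hp h4 with rfl | rfl
    · have : 2 ∣ C ^ 2 := dvd_pow hCe.two_dvd two_ne_zero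
      omega
    · have : 3 ∣ C := (Nat.dvd_add_left h3B).1 h3A
      have : 3 ∣ C ^ 2 := dvd_pow this two_ne_zero
      omega
  obtain ⟨m1, y1, h1, hs1⟩ := Nat.sq_mul_squarefree M1
  obtain ⟨m2, y2, h2, hs2⟩ := Nat.sq_mul_squarefree M2
  have hm1 : m1 ∣ M1 := ⟨y1 ^ 2, by rw [← h1]; ring⟩
  have hm2 : m2 ∣ M2 := ⟨y2 ^ 2, by rw [← h2]; ring⟩
  have hcm : Nat.Coprime m1 m2 := (hcop.coprime_dvd_left hm1).coprime_dvd_right hm2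
  have hsq : Squarefree (m1 * m2) := (Nat.squarefree_mul hcm).2 ⟨hs1, hs2⟩
  have hy1 : y1 ≠ 0 := by rintro rfl; simp at h1; omega
  have hy2 : y2 ≠ 0 := by rintro rfl; simp at h2; omega
  have e1 : ((C + B : ℕ) + (B : L)) ^ 2 - 1 = (y1 : L) ^ 2 * m1 := by
    have : ((M1 : L) + 1) = ((C + B : ℕ) + (B : L)) ^ 2 := by exact_mod_cast hM1
    rw [← this, ← h1]; push_cast; ring
  have e2 : (((C + B : ℕ) : L) - (B : L)) ^ 2 - 1 = (y2 : L) ^ 2 * m2 := by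
    have : ((M2 : L) + 1) = (C : L) ^ 2 := by exact_mod_cast hM2
    rw [show (((C + B : ℕ) : L) - (B : L)) = C by push_cast; ring, ← this, ← h2]; push_cast; ring
  rw [e1, e2] at hx
  have hy1L : (y1 : L) ≠ 0 := by exact_mod_cast hy1
  have hy2L : (y2 : L) ≠ 0 := by exact_mod_cast hy2
  simp only [Set.mem_iUnion]
  refine ⟨m1 * m2, ⟨hsq, x / (y1 * y2), ?_⟩, m1, ?_, hb, hkb, y1, ?_⟩
  · rw [div_pow, hx]; push_cast; field_simp
  · simp only [Finset.mem_coe, Nat.mem_divisors]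
    exact ⟨dvd_mul_right _ _, hsq.ne_zero⟩
  · simp only
    rw [hAZ, hBZ]
    have : ((M1 : ℤ) + 1) = ((C + B : ℕ) + (B : ℤ)) ^ 2 := by exact_mod_cast hM1
    rw [← this, ← h1]; push_cast; ring

theorem int_cubic (z p q r : ℂ) (hp : IsIntegral ℤ p) (hq : IsIntegral ℤ q) (hr : IsIntegral ℤ r)
    (h : z ^ 3 + p * z ^ 2 + q * z + r = 0) : IsIntegral ℤ z := by
  apply isIntegral_trans (A := integralClosure ℤ ℂ)
  let P : integralClosure ℤ ℂ := ⟨p, hp⟩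
  let Q : integralClosure ℤ ℂ := ⟨q, hq⟩
  let R : integralClosure ℤ ℂ := ⟨r, hr⟩
  refine ⟨(⟨1, P, Q, R⟩ : Cubic (integralClosure ℤ ℂ)).toPoly, ?_, ?_⟩
  · exact Cubic.monic_of_a_eq_one rfl
  · simp only [Cubic.toPoly, Polynomial.eval₂_add, Polynomial.eval₂_mul, Polynomial.eval₂_C,
      Polynomial.eval₂_pow, Polynomial.eval₂_X, map_one, one_mul]
    exact h

theorem int_num (n : ℕ) : IsIntegral ℤ ((n : ℕ) : ℂ) := by
  have := isIntegral_algebraMap (R := ℤ) (A := ℂ) (x := (n : ℤ))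
  simpa using this

theorem int_three : IsIntegral ℤ (3 : ℂ) := by exact_mod_cast int_num 3

theorem int_one_root (c N x y z : ℂ)
    (hc : IsIntegral ℤ c) (hN : IsIntegral ℤ N)
    (e1 : (c ^ 6 * N - 1) * (x + y + z) = -3 * c ^ 3 * N)
    (e2 : (c ^ 6 * N - 1) * (x * y + x * z + y * z) = 3 * N)
    (e3 : c ^ 3 * (c ^ 6 * N - 1) * (x * y * z) = -(N - 1)) : IsIntegral ℤ ((c ^ 6 * N - 1) * (c * x)) := by
  have i3 := int_three
  have hE : IsIntegral ℤ (c ^ 6 * N - 1) := ((hc.pow 6).mul hN).sub isIntegral_one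
  apply int_cubic _ (3 * c ^ 4 * N) (3 * c ^ 2 * (c ^ 6 * N - 1) * N) ((c ^ 6 * N - 1) ^ 2 * (N - 1))
  · exact (i3.mul (hc.pow 4)).mul hN
  · exact ((i3.mul (hc.pow 2)).mul hE).mul hN
  · exact (hE.pow 2).mul (hN.sub isIntegral_one)
  · generalize hEE : c ^ 6 * N - 1 = E at *
    linear_combination (c * (E * (c * x)) ^ 2) * e1 - (E * c ^ 2 * (E * (c * x))) * e2 + E ^ 2 * e3

theorem int_two_root (c N x y z : ℂ)
    (hc : IsIntegral ℤ c) (hN : IsIntegral ℤ N)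
    (e1 : (c ^ 6 * N - 1) * (x + y + z) = -3 * c ^ 3 * N)
    (e2 : (c ^ 6 * N - 1) * (x * y + x * z + y * z) = 3 * N)
    (e3 : c ^ 3 * (c ^ 6 * N - 1) * (x * y * z) = -(N - 1)) : IsIntegral ℤ ((c ^ 6 * N - 1) * ((c * x) * (c * y))) := by
  have i3 := int_three
  have hE : IsIntegral ℤ (c ^ 6 * N - 1) := ((hc.pow 6).mul hN).sub isIntegral_one
  apply int_cubic _ (-(3 * c ^ 2 * N)) (3 * c ^ 4 * N * (N - 1)) (-((c ^ 6 * N - 1) * (N - 1) ^ 2))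
  · exact ((i3.mul (hc.pow 2)).mul hN).neg
  · exact ((i3.mul (hc.pow 4)).mul hN).mul (hN.sub isIntegral_one)
  · exact (hE.mul ((hN.sub isIntegral_one).pow 2)).neg
  · generalize hEE : c ^ 6 * N - 1 = E at *
    generalize hw : E * ((c * x) * (c * y)) = w
    have h2 : E * c ^ 2 * (x * y + x * z + y * z) = 3 * c ^ 2 * N := by linear_combination c ^ 2 * e2
    have h3 : E ^ 2 * c ^ 4 * ((x + y + z) * (x * y * z)) = 3 * c ^ 4 * N * (N - 1) := by
      linear_combination (c ^ 4 * E * (x * y * z)) * e1 + (-3 * c ^ 4 * N) * e3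
    have h4 : E ^ 3 * c ^ 6 * (x * y * z) ^ 2 = E * (N - 1) ^ 2 := by
      linear_combination (E * (c ^ 3 * E * (x * y * z)) - E * (N - 1)) * e3
    rw [← h2, ← h3, ← h4, ← hw]
    ring

theorem int_of_le (c N x y z : ℂ) (E : ℂ) (hE : E = c ^ 6 * N - 1)
    (hc : IsIntegral ℤ c) (hN : IsIntegral ℤ N)
    (e1 : E * (x + y + z) = -3 * c ^ 3 * N)
    (e2 : E * (x * y + x * z + y * z) = 3 * N)
    (e3 : c ^ 3 * E * (x * y * z) = -(N - 1))
    (m : Multiset ℂ) (hm : m ≤ {x, y, z}) : IsIntegral ℤ (E * (m.map (fun u => c * u)).prod) := by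
  subst hE
  have h : m ∈ Multiset.powerset {x, y, z} := Multiset.mem_powerset.2 hm
  have a1 := int_one_root c N x y z hc hN e1 e2 e3
  have a2 := int_one_root c N y x z hc hN (by rw [← e1]; ring) (by rw [← e2]; ring) (by rw [← e3]; ring)
  have a3 := int_one_root c N z x y hc hN (by rw [← e1]; ring) (by rw [← e2]; ring) (by rw [← e3]; ring)
  have b1 := int_two_root c N x y z hc hN e1 e2 e3
  have b2 := int_two_root c N x z y hc hN (by rw [← e1]; ring) (by rw [← e2]; ring) (by rw [← e3]; ring)
  have b3 := int_two_root c N y z x hc hN (by rw [← e1]; ring) (by rw [← e2]; ring) (by rw [← e3]; ring)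
  have z1 : IsIntegral ℤ ((c ^ 6 * N - 1) * (c * x * (c * y * (c * z)))) := by
    have : (c ^ 6 * N - 1) * (c * x * (c * y * (c * z))) = -(N - 1) := by rw [← e3]; ring
    rw [this]
    exact (hN.sub isIntegral_one).neg
  have z0 : IsIntegral ℤ (c ^ 6 * N - 1) := ((hc.pow 6).mul hN).sub isIntegral_one
  have hs : ({x, y, z} : Multiset ℂ) = x ::ₘ y ::ₘ z ::ₘ 0 := rfl
  rw [hs] at h
  simp only [Multiset.powerset_cons, Multiset.powerset_zero, Multiset.map_add, Multiset.map_singleton,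
    Multiset.mem_add, Multiset.mem_singleton] at h
  rcases h with ((h | h) | (h | h)) | ((h | h) | (h | h)) <;> subst h <;>
    simpa using by assumption

theorem TSol_of (F : Type*) [Field F] [NumberField F] (k b : ℕ) (t : F) (hb : 1 ≤ b)
    (hkb : 21 * b ≤ k) (htop : IntermediateField.adjoin ℚ {t} = ⊤)
    (hno : ¬ ∃ t : ℚ, (3 : ℚ) ^ k * t ^ 3 + 1 = 9 ^ b * (3 ^ k * t + 1) ^ 3)
    (h : (3 : F) ^ k * t ^ 3 + 1 = 9 ^ b * (3 ^ k * t + 1) ^ 3) :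
    TSol F k b t (9 ^ k * 9 ^ b - 1) := by
  have ha := cub_a_ne k b hb
  have hi := cub_irr k b hb hno
  have h0 := cub_aeval_zero k b t h
  have hmin := minpoly.eq_of_irreducible hi h0
  have hint : IsIntegral ℚ t := Algebra.IsIntegral.isIntegral t
  have hfr : Module.finrank ℚ F = 3 := by
    rw [← IntermediateField.finrank_top', ← htop, IntermediateField.adjoin.finrank hint, ← hmin,
      Polynomial.natDegree_mul_C, Cubic.natDegree_of_a_ne_zero ha]
    exact inv_ne_zero (Polynomial.leadingCoeff_ne_zero.2 hi.ne_zero)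
  have hpos : 2 ≤ 9 ^ k * 9 ^ b := by
    calc 2 ≤ 1 * 9 ^ 1 := by norm_num
      _ ≤ 9 ^ k * 9 ^ b := Nat.mul_le_mul (Nat.one_le_pow _ _ (by norm_num)) (Nat.pow_le_pow_right (by norm_num) hb)
  refine ⟨hb, hkb, h, by omega, ?_, ?_⟩
  · rw [hfr, Nat.cast_sub (by omega), show 2 * 3 * k = 3 * (2 * k) by ring, pow_mul gam, gam_cube,
      pow_mul]
    push_cast
    have : (0:ℝ) < 9 ^ k * 9 ^ b := by positivity
    norm_num
    nlinarith
  · intro I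
    have hg : (((9 ^ k * 9 ^ b - 1 : ℕ) : ℕ) : ℂ) = ((gam : ℂ) ^ k) ^ 6 * 9 ^ b - 1 := by
      rw [Nat.cast_sub (by omega), ← pow_mul, mul_comm k 6, show 6 * k = 3 * (2 * k) by ring,
        pow_mul (gam : ℂ), gam_cubeC, pow_mul]
      push_cast; norm_num
    have hc3 : ((gam : ℂ) ^ k) ^ 3 = 3 ^ k := by rw [← pow_mul, mul_comm, pow_mul, gam_cubeC]
    have h3 : (3 : ℂ) ^ k ≠ 0 := pow_ne_zero _ three_ne_zero
    obtain ⟨x, y, z, hr⟩ := (Cubic.splits_iff_roots_eq_three (φ := algebraMap ℚ ℂ) ha).1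
      (IsAlgClosed.splits _)
    have v1 := Cubic.b_eq_three_roots ha hr
    have v2 := Cubic.c_eq_three_roots ha hr
    have v3 := Cubic.d_eq_three_roots ha hr
    simp only [cub, map_mul, map_pow, map_sub, map_one, map_ofNat] at v1 v2 v3
    have hE' : ((gam : ℂ) ^ k) ^ 6 = 9 ^ k := by
      rw [nine_eq k, ← hc3]; ring
    have hD : (((9 ^ k * 9 ^ b - 1 : ℕ) : ℕ) : ℂ) = 9 ^ k * 9 ^ b - 1 := by rw [hg, hE']
    have hprod : ∏ σ ∈ I, (gam : ℂ) ^ k * σ t =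
        ((I.val.map (fun σ : F →ₐ[ℚ] ℂ => σ t)).map (fun u => (gam : ℂ) ^ k * u)).prod := by
      rw [Multiset.map_map]; rfl
    rw [hprod]
    apply int_of_le ((gam : ℂ) ^ k) (9 ^ b) x y z _ hg (gam_int.pow k)
    · exact_mod_cast int_num (9 ^ b)
    · rw [hD, hc3]
      apply mul_left_cancel₀ h3
      rw [nine_eq k] at v1 ⊢
      linear_combination v1
    · rw [hD]
      apply mul_left_cancel₀ h3
      linear_combination -v2
    · rw [hD, hc3]
      linear_combination v3
    · rw [← hr]
      rw [Multiset.le_iff_subset]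
      · intro u hu
        obtain ⟨σ, -, rfl⟩ := Multiset.mem_map.1 hu
        rw [Cubic.roots, Cubic.map_toPoly, Polynomial.mem_roots
          (Polynomial.map_ne_zero hi.ne_zero), Polynomial.IsRoot.def, Polynomial.eval_map]
        have := congrArg σ h0
        rw [← Polynomial.aeval_algHom_apply, map_zero] at this
        exact this
      · apply Multiset.Nodup.map _ I.nodup
        intro σ τ hst
        apply AlgHom.ext
        intro u
        have hu : u ∈ IntermediateField.adjoin ℚ {t} := by rw [htop]; trivial
        induction hu using IntermediateField.adjoin_induction with
        | mem v hv => rw [Set.mem_singleton_iff.1 hv]; exact hst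
        | algebraMap r => simp
        | add a b _ _ h1 h2 => simp [h1, h2]
        | inv a _ h1 => simp [h1]
        | mul a b _ _ h1 h2 => simp [h1, h2]

open scoped IntermediateField.algebraAdjoinAdjoin in
/-- a finitely generated field contains only finitely many independent algebraic elements -/
theorem algClosure_finite (k F₀ : Type*) [Field k] [Field F₀] [Algebra k F₀]
    (hfg : ∃ S : Finset F₀, IntermediateField.adjoin k (S : Set F₀) = ⊤) :
    FiniteDimensional k (algebraicClosure k F₀) := by
  have hE : Algebra.EssFiniteType k F₀ := IntermediateField.fg_top_iff.1 hfg
  obtain ⟨s, hs⟩ := exists_finset_isTranscendenceBasis k F₀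
  let E : IntermediateField k F₀ := IntermediateField.adjoin k (s : Set F₀)
  have halg : Algebra.IsAlgebraic E F₀ := by
    have := hs.isAlgebraic_field
    rw [show Set.range ((↑) : s → F₀) = (s : Set F₀) from Subtype.range_coe] at this
    exact this
  have hE2 : Algebra.EssFiniteType E F₀ := Algebra.EssFiniteType.of_comp k E F₀
  have hfd : FiniteDimensional E F₀ := by
    obtain ⟨T, hT⟩ := IntermediateField.fg_top E F₀
    have h1 : FiniteDimensional E (IntermediateField.adjoin E (T : Set F₀)) :=
      IntermediateField.finiteDimensional_adjoin (fun x _ => (halg.isAlgebraic x).isIntegral)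
    rw [hT] at h1
    exact Module.Finite.equiv (IntermediateField.topEquiv (F := E) (E := F₀)).toLinearEquiv
  let K := algebraicClosure k F₀
  have hKalg : Algebra.IsAlgebraic k K := inferInstanceAs (Algebra.IsAlgebraic k (algebraicClosure k F₀))
  have hsK : AlgebraicIndependent K ((↑) : s → F₀) := hs.1.extendScalars K
  let v := Module.Basis.ofVectorSpace k K
  have hli : LinearIndependent (Algebra.adjoin k (s : Set F₀)) (fun i => ((v i : K) : F₀)) := by
    rw [linearIndependent_iff']
    intro I g hg i hi
    have hex : ∀ j, ∃ p : MvPolynomial s k, MvPolynomial.aeval ((↑) : s → F₀) p = (g j : F₀) := by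
      intro j
      have : ∀ u ∈ Algebra.adjoin k (s : Set F₀), ∃ p : MvPolynomial s k,
          MvPolynomial.aeval ((↑) : s → F₀) p = u := by
        intro u hu
        rw [show (s : Set F₀) = Set.range ((↑) : s → F₀) from Subtype.range_coe.symm,
          Algebra.adjoin_range_eq_range_aeval] at hu
        exact hu
      exact this _ (g j).2
    choose p hp using hex
    have h0 : (∑ j ∈ I, MvPolynomial.C (v j) * MvPolynomial.map (algebraMap k K) (p j) :
        MvPolynomial s K) = 0 := by
      apply hsK
      rw [map_zero, map_sum, ← hg]
      apply Finset.sum_congr rfl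
      intro j _
      rw [map_mul, MvPolynomial.aeval_C, MvPolynomial.aeval_map_algebraMap, hp j, Subalgebra.smul_def,
        smul_eq_mul, mul_comm]
      rfl
    have hpi : p i = 0 := by
      ext m
      have h1 := congrArg (MvPolynomial.coeff m) h0
      rw [MvPolynomial.coeff_sum, MvPolynomial.coeff_zero] at h1
      have h2 : ∑ j ∈ I, (MvPolynomial.coeff m (p j)) • v j = 0 := by
        rw [← h1]
        apply Finset.sum_congr rfl
        intro j _
        rw [MvPolynomial.coeff_C_mul, MvPolynomial.coeff_map, Algebra.smul_def, mul_comm]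
      exact linearIndependent_iff'.1 v.linearIndependent I _ h2 i hi
    apply Subtype.ext
    rw [← hp i, hpi, map_zero]
    rfl
  have hli2 : LinearIndependent E (fun i => ((v i : K) : F₀)) :=
    (LinearIndependent.iff_fractionRing (Algebra.adjoin k (s : Set F₀)) E).1 hli
  have hfin := hli2.finite
  exact Module.Finite.of_basis v

universe u v

theorem exists_normal (k : Type v) (K : Type u) [Field k] [Field K] [Algebra k K]
    [FiniteDimensional k K] :
    ∃ (L : Type u) (_ : Field L) (_ : Algebra k L) (_ : Algebra K L),
      FiniteDimensional k L ∧ Normal k L := by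
  have hAlg : Algebra.IsAlgebraic k (AlgebraicClosure K) := Algebra.IsAlgebraic.trans k K _
  have hAC : IsAlgClosure k (AlgebraicClosure K) := ⟨inferInstance, hAlg⟩
  have hAN : Normal k (AlgebraicClosure K) := IsAlgClosure.normal k _
  exact ⟨IntermediateField.normalClosure k K (AlgebraicClosure K), inferInstance, inferInstance,
    inferInstance, inferInstance, inferInstance⟩

theorem gen_top (k K : Type*) [Field k] [Field K] [Algebra k K] (t : K) :
    IntermediateField.adjoin k {IntermediateField.AdjoinSimple.gen k t} = ⊤ := by
  apply IntermediateField.lift_injective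
  rw [IntermediateField.lift_top, IntermediateField.lift_adjoin_simple]
  rfl

theorem adjoin_top_transfer (F : Type*) [Field F] (i1 i2 : Algebra ℚ F) (t : F)
    (h : @IntermediateField.adjoin ℚ _ F _ i1 {t} = ⊤) :
    @IntermediateField.adjoin ℚ _ F _ i2 {t} = ⊤ := by
  obtain rfl := Subsingleton.elim i1 i2
  exact h

theorem pairs_finite (K : Type*) [Field K] [NumberField K] :
    {p : ℕ × ℕ | 1 ≤ p.1 ∧ 1 ≤ p.2 ∧
      ∃ t : K, (3 : K) ^ p.1 * t ^ 3 + 1 = 9 ^ p.2 * (3 ^ p.1 * t + 1) ^ 3}.Finite := by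
  have hfin : Finite (IntermediateField ℚ K) :=
    Field.finite_intermediateField_of_exists_primitive_element ℚ K
      (Field.exists_primitive_element ℚ K)
  obtain ⟨L, _, _, _, _, _⟩ := exists_normal ℚ K
  have hL := caseI_gap L
  have hT : (⋃ F : IntermediateField ℚ K,
      {p : ℕ × ℕ | ∃ (t : F) (D : ℕ), TSol F p.1 p.2 t D}).Finite :=
    Set.finite_iUnion (fun F => T_finite F)
  apply ((caseII_finite.union hL).union hT).subset
  rintro ⟨k, b⟩ ⟨hk, hb, t, ht⟩
  simp only at hk hb ht
  by_cases hno : ∃ t : ℚ, (3 : ℚ) ^ k * t ^ 3 + 1 = 9 ^ b * (3 ^ k * t + 1) ^ 3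
  · exact Or.inl (Or.inl ⟨hk, hb, hno⟩)
  · by_cases hkb : k < 21 * b
    · refine Or.inl (Or.inr ⟨hk, hb, hkb, hno, algebraMap K L t, ?_⟩)
      have := congrArg (algebraMap K L) ht
      simpa only [map_add, map_mul, map_pow, map_one, map_ofNat] using this
    · refine Or.inr (Set.mem_iUnion.2 ⟨IntermediateField.adjoin ℚ {t},
        IntermediateField.AdjoinSimple.gen ℚ t, 9 ^ k * 9 ^ b - 1, ?_⟩)
      apply TSol_of _ k b _ hb (by omega) _ hno
      · apply (algebraMap (IntermediateField.adjoin ℚ {t}) K).injective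
        simp only [map_add, map_mul, map_pow, map_one, map_ofNat,
          IntermediateField.AdjoinSimple.algebraMap_gen]
        exact ht
      · exact adjoin_top_transfer _ _ _ _ (gen_top ℚ K t)

theorem numberField_of (K : Type*) [Field K] (i : Algebra ℚ K)
    (h : @FiniteDimensional ℚ K _ _ i.toModule) : NumberField K := by
  have hc : CharZero K := algebraRat.charZero K
  have : i = DivisionRing.toRatAlgebra := Subsingleton.elim _ _
  subst this
  exact { to_charZero := hc, to_finiteDimensional := h }

theorem mem_algClosure (k F₀ : Type*) [Field k] [Field F₀] [Algebra k F₀] (t : F₀)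
    (P : Polynomial k) (hP : P ≠ 0) (h : Polynomial.aeval t P = 0) : t ∈ algebraicClosure k F₀ :=
  mem_algebraicClosure_iff.2 ⟨P, hP, h⟩

theorem pairs_finite_fg (F₀ : Type*) [Field F₀] [CharZero F₀]
    (hfg : ∃ S : Finset F₀, IntermediateField.adjoin ℚ (S : Set F₀) = ⊤) :
    {p : ℕ × ℕ | 1 ≤ p.1 ∧ 1 ≤ p.2 ∧
      ∃ t : F₀, (3 : F₀) ^ p.1 * t ^ 3 + 1 = 9 ^ p.2 * (3 ^ p.1 * t + 1) ^ 3}.Finite := by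
  have hfd := algClosure_finite ℚ F₀ hfg
  have hNF : NumberField (algebraicClosure ℚ F₀) := numberField_of _ _ hfd
  apply (pairs_finite (algebraicClosure ℚ F₀)).subset
  rintro ⟨k, b⟩ ⟨hk, hb, t, ht⟩
  simp only at hk hb ht
  have h0 := cub_aeval_zero k b t ht
  have hne : (cub k b).toPoly ≠ 0 := Cubic.ne_zero_of_a_ne_zero (cub_a_ne k b hb)
  refine ⟨hk, hb, ⟨t, mem_algClosure ℚ F₀ t _ hne h0⟩, ?_⟩
  apply (algebraMap (algebraicClosure ℚ F₀) F₀).injective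
  simp only [map_add, map_mul, map_pow, map_one, map_ofNat]
  exact ht

theorem roots_finite (F₀ : Type*) [Field F₀] [CharZero F₀] (k b : ℕ) (hb : 1 ≤ b) :
    {t : F₀ | (3 : F₀) ^ k * t ^ 3 + 1 = 9 ^ b * (3 ^ k * t + 1) ^ 3}.Finite := by
  have hne : (cub k b).toPoly ≠ 0 := Cubic.ne_zero_of_a_ne_zero (cub_a_ne k b hb)
  apply (Polynomial.rootSet_finite (cub k b).toPoly F₀).subset
  intro t ht
  rw [Polynomial.mem_rootSet]
  exact ⟨hne, cub_aeval_zero k b t ht⟩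
/-- **Key finiteness (proof of Theorem `thm:precise 2`):** for `F₀` a finitely generated
field of characteristic `0`, the system `3^a₁ Z₁³ + 3^a₂ Z₂³ + Z₃³ = 0`,
`3^a₁ Z₁ + 3^a₂ Z₂ + Z₃ = 0` has only finitely many solutions `(a₁, a₂, [Z₁:Z₂:Z₃])` with
integers `a₁ > a₂ > 0` and `[Z₁:Z₂:Z₃] ∈ ℙ²(F₀)`. -/
theorem finitely_many_solutions_of_power_system
    (F₀ : Type) [Field F₀] [CharZero F₀]
    (hfg : ∃ S : Finset F₀, IntermediateField.adjoin ℚ (S : Set F₀) = ⊤) :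
    {x : ℕ × ℕ × Projectivization F₀ (Fin 3 → F₀) |
      x.2.1 < x.1 ∧ 0 < x.2.1 ∧
      ∃ (Z : Fin 3 → F₀) (hZ : Z ≠ 0), x.2.2 = Projectivization.mk F₀ Z hZ ∧
        (3 : F₀) ^ x.1 * Z 0 ^ 3 + (3 : F₀) ^ x.2.1 * Z 1 ^ 3 + Z 2 ^ 3 = 0 ∧
        (3 : F₀) ^ x.1 * Z 0 + (3 : F₀) ^ x.2.1 * Z 1 + Z 2 = 0}.Finite := by
  have hP := pairs_finite_fg F₀ hfg
  let g : F₀ → ℕ × ℕ → ℕ × ℕ × Projectivization F₀ (Fin 3 → F₀) := fun t p =>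
    (p.1 + p.2, p.2, Projectivization.mk F₀ ![t, 1, -(3 ^ (p.1 + p.2) * t + 3 ^ p.2)]
      (fun h => one_ne_zero (congrFun h 1)))
  have hU : (⋃ p ∈ {p : ℕ × ℕ | 1 ≤ p.1 ∧ 1 ≤ p.2 ∧
      ∃ t : F₀, (3 : F₀) ^ p.1 * t ^ 3 + 1 = 9 ^ p.2 * (3 ^ p.1 * t + 1) ^ 3},
      (fun t => g t p) '' {t : F₀ | (3 : F₀) ^ p.1 * t ^ 3 + 1 = 9 ^ p.2 * (3 ^ p.1 * t + 1) ^ 3}).Finite := by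
    apply hP.biUnion
    intro p hp
    exact (roots_finite F₀ p.1 p.2 hp.2.1).image _
  apply hU.subset
  rintro ⟨a, b, P⟩ ⟨hab, hb, Z, hZ, rfl, h3, h1⟩
  simp only at hab hb h3 h1
  obtain ⟨k, rfl⟩ : ∃ k, a = k + b := ⟨a - b, by omega⟩
  have hk : 1 ≤ k := by omega
  have hz2 : Z 2 = -(3 ^ (k + b) * Z 0 + 3 ^ b * Z 1) := by linear_combination h1
  rw [hz2] at h3
  have h30 : (3 : F₀) ≠ 0 := three_ne_zero
  have hB0 : (3 : F₀) ^ b ≠ 0 := pow_ne_zero _ h30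
  have hA0 : (3 : F₀) ^ (k + b) ≠ 0 := pow_ne_zero _ h30
  have hz1 : Z 1 ≠ 0 := by
    intro h
    rw [h] at h3 hz2
    have hnz : (1 : F₀) - 9 ^ (k + b) ≠ 0 := by
      rw [sub_ne_zero]
      have : (1 : ℕ) ≠ 9 ^ (k + b) := (Nat.one_lt_pow (by omega) (by norm_num)).ne
      exact_mod_cast this
    have h0 : ((3 : F₀) ^ (k + b) * (1 - 9 ^ (k + b))) * Z 0 ^ 3 = 0 := by
      rw [nine_eq (k + b)]
      linear_combination h3
    have hz0 : Z 0 = 0 := by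
      rcases mul_eq_zero.1 h0 with h' | h'
      · exact absurd h' (mul_ne_zero hA0 hnz)
      · exact pow_eq_zero_iff (three_ne_zero) |>.1 h'
    apply hZ
    funext i
    fin_cases i
    · exact hz0
    · exact h
    · simpa [hz0] using hz2
  have ht : (3 : F₀) ^ k * (Z 0 / Z 1) ^ 3 + 1 = 9 ^ b * (3 ^ k * (Z 0 / Z 1) + 1) ^ 3 := by
    have e : (3 : F₀) ^ k * Z 0 ^ 3 + Z 1 ^ 3 = (3 ^ b) ^ 2 * (3 ^ k * Z 0 + Z 1) ^ 3 := by
      apply mul_left_cancel₀ hB0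
      rw [pow_add] at h3
      linear_combination h3
    rw [nine_eq b]
    field_simp
    linear_combination e
  simp only [Set.mem_iUnion]
  refine ⟨(k, b), ⟨hk, hb, _, ht⟩, Z 0 / Z 1, ht, ?_⟩
  simp only [g, Prod.mk.injEq, true_and]
  rw [Projectivization.mk_eq_mk_iff']
  refine ⟨(Z 1)⁻¹, ?_⟩
  funext i
  fin_cases i
  · simp only [Fin.zero_eta, Pi.smul_apply, smul_eq_mul, Matrix.cons_val_zero]
    field_simp
  · simp [hz1]
  · simp only [Fin.reduceFinMk, Pi.smul_apply, smul_eq_mul, Matrix.cons_val]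
    rw [hz2]
    field_simp
end

section
/- Let F₀ be a field of characteristic 0, let r₁, r₂ ∈ {0, 1, 2}, and let q₁, q₂ be integers with q₁ > q₂ ≥ 0 and 3q₁ + r₁ > 3q₂ + r₂ > 0. Then there is no nonzero triple (Z₁, Z₂, Z₃) ∈ F₀³ with Z₁Z₂Z₃ = 0 satisfying both 3^{r₁}Z₁³ + 3^{r₂}Z₂³ + Z₃³ = 0 and 9^{q₁}Z₁ + 9^{q₂}Z₂ + Z₃ = 0. -/
theorem aux_two {F : Type} [Field F] [CharZero F] (a b c d : ℕ) (x y : F)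
    (hne : a + 6 * d ≠ b + 6 * c)
    (h : (3 : F) ^ a * x ^ 3 + (3 : F) ^ b * y ^ 3 = 0)
    (h' : (9 : F) ^ c * x + (9 : F) ^ d * y = 0) : x = 0 ∧ y = 0 := by
  have h9 : (9 : F) = 3 ^ 2 := by norm_num
  have hx : x = 0 := by
    by_contra hx
    apply hne
    have e : (9 : F) ^ d * y = -((9 : F) ^ c * x) := by linear_combination h'
    have e3 : ((9 : F) ^ d * y) ^ 3 = (-((9 : F) ^ c * x)) ^ 3 := by rw [e]
    have k : ((3 : F) ^ a * ((9 : F) ^ d) ^ 3) * x ^ 3 = ((3 : F) ^ b * ((9 : F) ^ c) ^ 3) * x ^ 3 := by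
      linear_combination ((9 : F) ^ d) ^ 3 * h - (3 : F) ^ b * e3
    have k2 := mul_right_cancel₀ (pow_ne_zero 3 hx) k
    rw [h9, ← pow_mul, ← pow_mul, ← pow_mul, ← pow_mul, ← pow_add, ← pow_add] at k2
    have k3 : (3 : ℕ) ^ (a + 2 * (d * 3)) = 3 ^ (b + 2 * (c * 3)) := by exact_mod_cast k2
    have k4 := Nat.pow_right_injective (le_refl 2 |>.trans (by norm_num : 2 ≤ 3)) k3
    omega
  refine ⟨hx, ?_⟩
  subst hx
  have : (9 : F) ^ d ≠ 0 := pow_ne_zero _ (by norm_num)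
  simpa [this] using h'

/-- **Degenerate solutions (end of proof of Theorem `thm:precise 2`):** over a field `F₀` of
characteristic `0`, for `r₁, r₂ ∈ {0, 1, 2}` and integers `q₁ > q₂ ≥ 0` with
`3q₁ + r₁ > 3q₂ + r₂ > 0`, the system `3^r₁ Z₁³ + 3^r₂ Z₂³ + Z₃³ = 0`,
`9^q₁ Z₁ + 9^q₂ Z₂ + Z₃ = 0` has no nonzero solution `(Z₁, Z₂, Z₃)` with `Z₁Z₂Z₃ = 0`. -/
theorem no_degenerate_solutions
    (F₀ : Type) [Field F₀] [CharZero F₀]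
    (r₁ r₂ : ℕ) (hr₁ : r₁ ≤ 2) (hr₂ : r₂ ≤ 2)
    (q₁ q₂ : ℕ) (hq : q₂ < q₁)
    (h₁ : 3 * q₂ + r₂ < 3 * q₁ + r₁) (h₂ : 0 < 3 * q₂ + r₂) :
    ¬ ∃ Z₁ Z₂ Z₃ : F₀, (Z₁, Z₂, Z₃) ≠ (0, 0, 0) ∧ Z₁ * Z₂ * Z₃ = 0 ∧
      (3 : F₀) ^ r₁ * Z₁ ^ 3 + (3 : F₀) ^ r₂ * Z₂ ^ 3 + Z₃ ^ 3 = 0 ∧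
      (9 : F₀) ^ q₁ * Z₁ + (9 : F₀) ^ q₂ * Z₂ + Z₃ = 0 := by
  rintro ⟨x, y, z, hne, h0, hc, hl⟩
  apply hne
  rcases mul_eq_zero.mp h0 with h | rfl
  · rcases mul_eq_zero.mp h with rfl | rfl
    · obtain ⟨rfl, rfl⟩ := aux_two r₂ 0 q₂ 0 y z (by omega)
        (by linear_combination hc) (by linear_combination hl)
      rfl
    · obtain ⟨rfl, rfl⟩ := aux_two r₁ 0 q₁ 0 x z (by omega)
        (by linear_combination hc) (by linear_combination hl)
      rfl
  · obtain ⟨rfl, rfl⟩ := aux_two r₁ r₂ q₁ q₂ x y (by omega)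
      (by linear_combination hc) (by linear_combination hl)
    rfl
end
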